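/- Let $K$ be an algebraically closed field and let $\Gamma$ be a Brauer tree of multiplicity one, i.e. a finite tree with a cyclic ordering of the edges around each vertex. Its Brauer quiver $Q$ has the edges of $\Gamma$ as vertices and, for each vertex $p$ of $\Gamma$ and each edge $i$ at $p$, an arrow from $i$ to the edge following $i$ in the cyclic order at $p$ (a loop if $p$ is a leaf). Let $A = KQ/I$ be the basic Brauer tree algebra ($ab$ denotes the path $a$ followed by $b$), where $I$ is generated by the products $ab$ of arrows belonging to different vertices of $\Gamma$ and, for each vertex $i$ of $Q$, by the difference of the two full cycles at $i$ belonging to the two ends of the edge $i$. An $A$-cycle is a maximal ordered set of nonrepeating arrows of $Q$ such that the product in $A$ of any two neighboring arrows is nonzero. Consider complexes $T = (P_0 \xrightarrow{f} P_1)$ of finitely generated projective left $A$-modules concentrated in degrees $0$ and $1$ that are indecomposable and partial tilting ($\mathrm{Hom}_{D^b(A)}(T,T[k])=0$ for all $k\neq 0$) and that are minimal projective presentations of indecomposable non-projective $A$-modules. The diagram of such a $T$ is the path in $Q$ (not necessarily directed) that is connected, has more than one vertex and no self-intersections, and changes its orientation exactly when it changes the $A$-cycle, such that $P_0 \cong \bigoplus_i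 Ae_i$ with $i$ running over the sources of the path, $P_1 \cong \bigoplus_j Ae_j$ with $j$ running over its sinks, and, for suitable such isomorphisms, the component $Ae_i \to Ae_j$ of $f$ is nonzero exactly when the path contains a directed subpath from $i$ to $j$. A source (sink) has degree one if it is an end point of the diagram. Let $T_i$ and $T_j$ be two such complexes, and suppose that their diagrams both have vertices belonging to an $A$-cycle $\Upsilon$ but have no vertex in common. Then $$\mathrm{Hom}_{D^b(A)}(T_i, T_j[-1]) = 0 = \mathrm{Hom}_{D^b(A)}(T_j, T_i[-1])$$ if and only if neither of the following two conditions holds: (1) $\Upsilon$ contains a degree-one source of $T_j$ and a degree-one sink of $T_i$, and these are the only vertices of the diagrams of $T_i$ and $T_j$ belonging to $\Upsilon$; (2) the same with the roles of $T_i$ and $T_j$ exchanged. -/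

import Mathlib

open CategoryTheory CategoryTheory.Limits

universe w u v

/-- A Brauer tree of multiplicity one: a tree with a cyclic ordering of the edges around each
vertex. An edge at the vertex `p` is encoded by the dart starting at `p`, and `next d` is the edge
that follows `d` in the cyclic order around `d.fst`. (For multiplicity one the exceptional vertex
plays no role.) -/
structure BrauerTree (V : Type v) where
  graph : SimpleGraph V
  isTree : graph.IsTree
  next : Equiv.Perm graph.Dart
  next_fst : ∀ d, (next d).fst = d.fst
  next_sameCycle : ∀ d d' : graph.Dart, d.fst = d'.fst → next.SameCycle d d'

namespace BrauerTree

variable {V : Type v} (Γ : BrauerTree V)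

/-- The vertices of the Brauer quiver: the edges of the tree. -/
abbrev QVertex : Type v := Γ.graph.edgeSet

/-- The arrows of the Brauer quiver, one for each incidence of an edge with a vertex `p` of the
tree: the dart `d` gives the arrow from the edge of `d` to the edge following it around `d.fst`.
(For a leaf this is a loop.) -/
abbrev Arrow : Type v := Γ.graph.Dart

variable {Γ}

/-- The source of an arrow of the Brauer quiver. -/
def src (a : Γ.Arrow) : Γ.QVertex := ⟨a.edge, a.edge_mem⟩

/-- The target of an arrow of the Brauer quiver. -/
def tgt (a : Γ.Arrow) : Γ.QVertex := src (Γ.next a)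

variable (Γ)

/-- Generators of the path algebra: trivial paths and arrows. -/
inductive Gen : Type v
  | idem (x : Γ.QVertex) : Gen
  | arrow (a : Γ.Arrow) : Gen

variable (K : Type u) [Field K]

/-- A trivial path in the free algebra. -/
def freeIdem (x : Γ.QVertex) : FreeAlgebra K Γ.Gen := FreeAlgebra.ι K (Gen.idem x)

/-- An arrow in the free algebra. -/
def freeArrow (a : Γ.Arrow) : FreeAlgebra K Γ.Gen := FreeAlgebra.ι K (Gen.arrow a)

/-- The product of the arrows met when running once around the cycle of `a`, starting with `a`. -/
noncomputable def freeCycle (a : Γ.Arrow) : FreeAlgebra K Γ.Gen :=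
  ((List.range (Function.minimalPeriod Γ.next a)).map
    fun k => Γ.freeArrow K ((Γ.next ^ k) a)).prod

/-- The defining relations of the basic Brauer tree algebra. The first five present the path
algebra of the Brauer quiver (where `a * b` means first `a`, then `b`); the last two generate the
ideal: the product of two arrows from different cycles is zero, and the two full cycles through a
vertex (those of `a` and `a.symm`, for `a` starting there) are equal. -/
inductive Rel : FreeAlgebra K Γ.Gen → FreeAlgebra K Γ.Gen → Prop
  | idem_mul_self (x : Γ.QVertex) :
      Rel (Γ.freeIdem K x * Γ.freeIdem K x) (Γ.freeIdem K x)
  | idem_mul_idem (x y : Γ.QVertex) (h : x ≠ y) :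
      Rel (Γ.freeIdem K x * Γ.freeIdem K y) 0
  | sum_idem : Rel (∑ᶠ x : Γ.QVertex, Γ.freeIdem K x) 1
  | src_mul (a : Γ.Arrow) : Rel (Γ.freeIdem K (src a) * Γ.freeArrow K a) (Γ.freeArrow K a)
  | mul_tgt (a : Γ.Arrow) : Rel (Γ.freeArrow K a * Γ.freeIdem K (tgt a)) (Γ.freeArrow K a)
  | arrow_mul_arrow (a b : Γ.Arrow) (h : a.fst ≠ b.fst) :
      Rel (Γ.freeArrow K a * Γ.freeArrow K b) 0
  | cycle_eq (a : Γ.Arrow) : Rel (Γ.freeCycle K a) (Γ.freeCycle K a.symm)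

/-- The basic Brauer tree algebra of `Γ` over `K`, with multiplicity one. -/
def Alg : Type (max u v) := RingQuot (Γ.Rel K)

noncomputable instance : Ring (Γ.Alg K) := inferInstanceAs (Ring (RingQuot (Γ.Rel K)))

noncomputable instance : Algebra K (Γ.Alg K) :=
  inferInstanceAs (Algebra K (RingQuot (Γ.Rel K)))

/-- The primitive idempotent of a vertex of the Brauer quiver. -/
noncomputable def idem (x : Γ.QVertex) : Γ.Alg K :=
  RingQuot.mkAlgHom K (Γ.Rel K) (Γ.freeIdem K x)

/-- The image of an arrow in the Brauer tree algebra. -/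
noncomputable def arrow (a : Γ.Arrow) : Γ.Alg K :=
  RingQuot.mkAlgHom K (Γ.Rel K) (Γ.freeArrow K a)

/-- The indecomposable projective left module `A e_x`. -/
noncomputable def proj (x : Γ.QVertex) : ModuleCat.{max u v} (Γ.Alg K) :=
  ModuleCat.of (Γ.Alg K) (Ideal.span {Γ.idem K x} : Ideal (Γ.Alg K))

/-- An ordered set of nonrepeating arrows in which neighboring arrows have nonzero product. -/
def IsNonzeroChain (c : List Γ.Arrow) : Prop :=
  c.Nodup ∧ c.IsChain fun a b => Γ.arrow K a * Γ.arrow K b ≠ 0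

/-- An `A`-cycle: a maximal ordered set of nonrepeating arrows in which neighboring arrows have
nonzero product. -/
def IsACycle (c : List Γ.Arrow) : Prop :=
  Γ.IsNonzeroChain K c ∧ ∀ c', Γ.IsNonzeroChain K c' → c.Sublist c' → c' = c

variable {Γ} in
/-- The vertex `x` of the quiver belongs to the given `A`-cycle. -/
def OnCycle (c : List Γ.Arrow) (x : Γ.QVertex) : Prop :=
  ∃ a ∈ c, src a = x ∨ tgt a = x

/-- Two arrows lie on a common `A`-cycle. -/
def SameACycle (a b : Γ.Arrow) : Prop :=
  ∃ c, Γ.IsACycle K c ∧ a ∈ c ∧ b ∈ c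

/-- A step of an undirected path on the quiver: an arrow, traversed along its direction (`true`)
or against it (`false`). -/
abbrev Step : Type v := Γ.Arrow × Bool

variable {Γ}

/-- The vertex at which a step starts. -/
def Step.start (s : Γ.Step) : Γ.QVertex := if s.2 then src s.1 else tgt s.1

/-- The vertex at which a step ends. -/
def Step.finish (s : Γ.Step) : Γ.QVertex := if s.2 then tgt s.1 else src s.1

/-- The vertices visited by a sequence of steps, in order. -/
def stepVertices : List Γ.Step → List Γ.QVertex
  | [] => []
  | s :: l => Step.start s :: (s :: l).map Step.finish

variable (Γ)

/-- A diagram on the quiver: a connected path without self-intersections, consisting of more than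
one vertex, which changes its orientation exactly when it changes the `A`-cycle. -/
structure Diagram where
  steps : List Γ.Step
  steps_ne_nil : steps ≠ []
  connected : steps.IsChain fun s t => Step.finish s = Step.start t
  nodup : (stepVertices steps).Nodup
  turns : steps.IsChain fun s t => s.2 ≠ t.2 ↔ ¬ Γ.SameACycle K s.1 t.1

namespace Diagram

variable {Γ K} (Θ : Γ.Diagram K)

/-- The vertices of the diagram, in order. -/
def vertices : List Γ.QVertex := stepVertices Θ.steps

/-- The arrows of the diagram. -/
def arrows : List Γ.Arrow := Θ.steps.map Prod.fst

/-- A source of the diagram: no arrow of the diagram ends there. -/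
def IsSource (x : Γ.QVertex) : Prop := x ∈ Θ.vertices ∧ ∀ a ∈ Θ.arrows, tgt a ≠ x

/-- A sink of the diagram: no arrow of the diagram starts there. -/
def IsSink (x : Γ.QVertex) : Prop := x ∈ Θ.vertices ∧ ∀ a ∈ Θ.arrows, src a ≠ x

/-- An end point of the diagram. -/
def IsEndpoint (x : Γ.QVertex) : Prop :=
  Θ.vertices.head? = some x ∨ Θ.vertices.getLast? = some x

/-- A degree-one source: a source that is an end point of the diagram. -/
def IsDegreeOneSource (x : Γ.QVertex) : Prop := Θ.IsSource x ∧ Θ.IsEndpoint x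

/-- A degree-one sink: a sink that is an end point of the diagram. -/
def IsDegreeOneSink (x : Γ.QVertex) : Prop := Θ.IsSink x ∧ Θ.IsEndpoint x

/-- The diagram contains a directed path of the quiver from `x` to `y`. -/
def HasDirectedPath (x y : Γ.QVertex) : Prop :=
  Relation.TransGen (fun p q => ∃ a ∈ Θ.arrows, src a = p ∧ tgt a = q) x y

instance : Finite {x // Θ.IsSource x} :=
  Set.Finite.subset (List.finite_toSet Θ.vertices) fun _ h => h.1

instance : Finite {x // Θ.IsSink x} :=
  Set.Finite.subset (List.finite_toSet Θ.vertices) fun _ h => h.1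

/-- `Θ` is the diagram of the two-term complex `T`: the sources of `Θ` index the summands `A e_i`
of `T⁰`, the sinks of `Θ` index the summands `A e_j` of `T¹`, and the component `A e_i ⟶ A e_j` of
the differential is nonzero exactly when the directed path from `i` to `j` is part of `Θ`. -/
def IsDiagramOf (T : CochainComplex (ModuleCat.{max u v} (Γ.Alg K)) ℤ) : Prop :=
  ∃ (φ₀ : T.X 0 ≅ ⨁ fun i : {x // Θ.IsSource x} => Γ.proj K i.1)
    (φ₁ : T.X 1 ≅ ⨁ fun j : {x // Θ.IsSink x} => Γ.proj K j.1),
    ∀ (i : {x // Θ.IsSource x}) (j : {x // Θ.IsSink x}),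
      biproduct.ι (fun i : {x // Θ.IsSource x} => Γ.proj K i.1) i ≫ φ₀.inv ≫ T.d 0 1 ≫ φ₁.hom ≫
        biproduct.π (fun j : {x // Θ.IsSink x} => Γ.proj K j.1) j ≠ 0 ↔
      Θ.HasDirectedPath i.1 j.1

/-- `c` contains a degree-one source of `Θ'` and a degree-one sink of `Θ`, and these are the only
vertices of `Θ` and `Θ'` belonging to `c`. -/
def SinkSourceOn (Θ Θ' : Γ.Diagram K) (c : List Γ.Arrow) : Prop :=
  ∃ s t, Θ'.IsDegreeOneSource s ∧ OnCycle c s ∧ Θ.IsDegreeOneSink t ∧ OnCycle c t ∧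
    (∀ x ∈ Θ'.vertices, OnCycle c x → x = s) ∧ (∀ x ∈ Θ.vertices, OnCycle c x → x = t)

end Diagram

end BrauerTree

section Complexes

variable {A : Type u} [Ring A]

/-- A submodule `N` of `M` is superfluous if `N + L = M` only for `L = M`. -/
def IsSuperfluous {M : Type v} [AddCommGroup M] [Module A M] (N : Submodule A M) : Prop :=
  ∀ L : Submodule A M, N ⊔ L = ⊤ → L = ⊤

/-- `T⁰ ⟶ T¹` is a minimal projective presentation of `M`: it is followed by a surjection
`T¹ ⟶ M` with kernel the image of `T⁰`, where `T⁰` and `T¹` are projective and `T¹ ⟶ M` and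
`T⁰ ⟶ ker (T¹ ⟶ M)` have superfluous kernels (i.e. are projective covers). -/
def IsMinimalProjectivePresentation (T : CochainComplex (ModuleCat.{u} A) ℤ) (M : ModuleCat.{u} A) :
    Prop :=
  Module.Projective A (T.X 0) ∧ Module.Projective A (T.X 1) ∧
    ∃ π : T.X 1 ⟶ M, Function.Surjective π ∧ Function.Exact (T.d 0 1) π ∧
      IsSuperfluous (LinearMap.ker π.hom) ∧ IsSuperfluous (LinearMap.ker (T.d 0 1).hom)

/-- `T` is, as a complex in degrees `0` and `1`, the minimal projective presentation of an
indecomposable non-projective module. -/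
def IsPresentationOfModule (T : CochainComplex (ModuleCat.{u} A) ℤ) : Prop :=
  ∃ M : ModuleCat.{u} A, Indecomposable M ∧ ¬ Module.Projective A M ∧
    IsMinimalProjectivePresentation T M

/-- `Hom(S, T[k]) = 0` in the derived category. Complexes of modules are identified with their
images in the derived category; the bounded derived category is a full subcategory of it. -/
def DerivedHomVanishes [HasDerivedCategory.{w} (ModuleCat.{u} A)]
    (S T : CochainComplex (ModuleCat.{u} A) ℤ) (k : ℤ) : Prop :=
  ∀ f : DerivedCategory.Q.obj S ⟶ (DerivedCategory.Q.obj T)⟦k⟧, f = 0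

/-- `T` is an indecomposable two-term partial tilting complex: a complex of finitely generated
projective modules concentrated in degrees `0` and `1`, indecomposable in the derived category,
with `Hom(T, T[k]) = 0` for all `k ≠ 0`. -/
structure IsIndecTwoTermPartialTilting [HasDerivedCategory.{w} (ModuleCat.{u} A)]
    (T : CochainComplex (ModuleCat.{u} A) ℤ) : Prop where
  twoTerm : ∀ n : ℤ, n ≠ 0 → n ≠ 1 → IsZero (T.X n)
  finite : ∀ n : ℤ, Module.Finite A (T.X n)
  projective : ∀ n : ℤ, Module.Projective A (T.X n)
  indecomposable : Indecomposable (DerivedCategory.Q.obj T)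
  hom_vanishes : ∀ k : ℤ, k ≠ 0 → DerivedHomVanishes T T k

end Complexes

section TwoTerm

variable {A : Type u} [Ring A]

lemma shift_neg_one_d_one_two (T : CochainComplex (ModuleCat.{u} A) ℤ) :
    (T⟦(-1 : ℤ)⟧).d 1 2 = -((T.shiftFunctorObjXIso (-1) 1 0 rfl).hom ≫ T.d 0 1 ≫
      (T.shiftFunctorObjXIso (-1) 2 1 rfl).inv) := by
  simp [CochainComplex.shiftFunctorObjXIso]
  rfl

/-- A morphism `S¹ ⟶ T⁰` annihilated by the differentials gives a morphism of complexes
`S ⟶ T[-1]`, if `S` is concentrated in degrees `0` and `1`. -/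
noncomputable def shiftedHomOfTwoTerm {S T : CochainComplex (ModuleCat.{u} A) ℤ}
    (hS : ∀ n : ℤ, n ≠ 0 → n ≠ 1 → IsZero (S.X n))
    (g : S.X 1 ⟶ T.X 0) (h₁ : S.d 0 1 ≫ g = 0) (h₂ : g ≫ T.d 0 1 = 0) : S ⟶ T⟦(-1 : ℤ)⟧ where
  f n := if h : n = 1 then
    (S.XIsoOfEq h).hom ≫ g ≫ (T.shiftFunctorObjXIso (-1) n 0 (by omega)).inv else 0
  comm' i j hij := by
    obtain rfl : i + 1 = j := hij
    by_cases h0 : i = 0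
    · subst h0
      rw [dif_neg (by omega), dif_pos (by omega), zero_comp,
        HomologicalComplex.d_comp_XIsoOfEq_hom_assoc, ← Category.assoc, h₁, zero_comp]
    · by_cases h1 : i = 1
      · subst h1
        rw [dif_pos rfl, dif_neg (by omega), comp_zero]
        have h : g ≫ (T.shiftFunctorObjXIso (-1) 1 0 rfl).inv ≫ (T⟦(-1 : ℤ)⟧).d 1 2 = 0 := by
          rw [shift_neg_one_d_one_two, Preadditive.comp_neg, Iso.inv_hom_id_assoc,
            Preadditive.comp_neg, ← Category.assoc, h₂, zero_comp, neg_zero]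
        rw [Category.assoc, Category.assoc]
        exact (congrArg (_ ≫ ·) h).trans comp_zero
      · exact (hS i h0 h1).eq_of_src _ _

theorem derivedHomVanishes_neg_one_iff [HasDerivedCategory.{w} (ModuleCat.{u} A)]
    {S T : CochainComplex (ModuleCat.{u} A) ℤ}
    (hS : ∀ n : ℤ, n ≠ 0 → n ≠ 1 → IsZero (S.X n))
    (hT : ∀ n : ℤ, n ≠ 0 → n ≠ 1 → IsZero (T.X n))
    (hproj : ∀ n : ℤ, Module.Projective A (S.X n)) :
    DerivedHomVanishes S T (-1) ↔
      ∀ g : S.X 1 ⟶ T.X 0, S.d 0 1 ≫ g = 0 → g ≫ T.d 0 1 = 0 → g = 0 := by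
  have hproj' : ∀ n : ℤ, Projective (S.X n) := fun n => by have := hproj n; infer_instance
  have : S.IsStrictlyLE 1 := by
    rw [CochainComplex.isStrictlyLE_iff]
    intro i hi
    exact hS i (by omega) (by omega)
  have : S.IsKProjective := CochainComplex.isKProjective_of_projective S 1
  have hbij := CochainComplex.IsKProjective.Qh_map_bijective S
    ((HomotopyCategory.quotient _ _).obj (T⟦(-1 : ℤ)⟧))
  have hT' (j : ℤ) (h1 : j ≠ 1) (h2 : j ≠ 2) : IsZero ((T⟦(-1 : ℤ)⟧).X j) :=
    hT (j + -1) (by omega) (by omega)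
  let e : (DerivedCategory.Q.obj T)⟦(-1 : ℤ)⟧ ≅ DerivedCategory.Q.obj (T⟦(-1 : ℤ)⟧) :=
    ((DerivedCategory.Q.commShiftIso (-1 : ℤ)).app T).symm
  have hQ : DerivedHomVanishes S T (-1) ↔ ∀ φ : S ⟶ T⟦(-1 : ℤ)⟧, φ = 0 := by
    constructor
    · intro h φ
      have h0 : DerivedCategory.Q.map φ = 0 := by
        rw [← cancel_mono e.inv, h (DerivedCategory.Q.map φ ≫ e.inv), zero_comp]
      have h1 : (HomotopyCategory.quotient _ _).map φ = 0 := by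
        apply hbij.injective
        rw [Functor.map_zero]
        have := DerivedCategory.quotientCompQhIso_hom_naturality φ
        rw [h0, comp_zero] at this
        rwa [← cancel_mono ((DerivedCategory.quotientCompQhIso _).hom.app (T⟦(-1 : ℤ)⟧)),
          zero_comp]
      have h2 := HomotopyCategory.homotopyOfEq φ 0 (by rw [h1, Functor.map_zero])
      have h3 (i j : ℤ) : h2.hom i j = 0 := by
        by_cases hij : (ComplexShape.up ℤ).Rel j i
        · obtain rfl : j + 1 = i := hij
          by_cases h4 : j + 1 = 0 ∨ j + 1 = 1
          · exact (hT' j (by omega) (by omega)).eq_of_tgt _ _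
          · exact (hS (j + 1) (by omega) (by omega)).eq_of_src _ _
        · exact h2.zero i j hij
      ext1 n
      have := h2.comm n
      rwa [show h2.hom = 0 by ext i j : 2; exact h3 i j, map_zero, map_zero, zero_add,
        zero_add] at this
    · intro h f
      rw [← cancel_mono e.hom, zero_comp]
      obtain ⟨g, hg⟩ := hbij.surjective ((DerivedCategory.quotientCompQhIso _).hom.app S ≫
        (f ≫ e.hom) ≫ (DerivedCategory.quotientCompQhIso _).inv.app (T⟦(-1 : ℤ)⟧))
      obtain ⟨φ, rfl⟩ := (HomotopyCategory.quotient _ _).map_surjective g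
      rw [h φ, Functor.map_zero, Functor.map_zero] at hg
      rw [← cancel_epi ((DerivedCategory.quotientCompQhIso _).hom.app S),
        ← cancel_mono ((DerivedCategory.quotientCompQhIso _).inv.app (T⟦(-1 : ℤ)⟧))]
      simpa using hg.symm
  rw [hQ]
  constructor
  · intro h g h₁ h₂
    have := congrArg (fun φ => φ.f 1) (h (shiftedHomOfTwoTerm hS g h₁ h₂))
    dsimp only [shiftedHomOfTwoTerm] at this
    rw [dif_pos rfl, HomologicalComplex.zero_f, Preadditive.IsIso.comp_left_eq_zero,
      Preadditive.IsIso.comp_right_eq_zero] at this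
    exact this
  · intro h φ
    ext1 n
    by_cases h1 : n = 1
    · subst h1
      have h2 := h (φ.f 1 ≫ (T.shiftFunctorObjXIso (-1) 1 0 rfl).hom) (by
          rw [← Category.assoc, ← φ.comm 0 1, (hT' 0 (by omega) (by omega)).eq_of_tgt (φ.f 0) 0,
            zero_comp, zero_comp]) (by
          have := φ.comm 1 2
          rw [(hS 2 (by omega) (by omega)).eq_of_src (φ.f 2) 0, comp_zero,
            shift_neg_one_d_one_two, Preadditive.comp_neg, neg_eq_zero] at this
          rw [← cancel_mono (T.shiftFunctorObjXIso (-1) 2 1 rfl).inv, zero_comp, ← this]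
          simp only [Category.assoc])
      rwa [Preadditive.IsIso.comp_right_eq_zero] at h2
    · by_cases h0 : n = 0
      · exact (hT' n (by omega) (by omega)).eq_of_tgt _ _
      · exact (hS n h0 h1).eq_of_src _ _

end TwoTerm

namespace BrauerTree

variable {V : Type v} {Γ : BrauerTree V}

lemma next_pow_fst (a : Γ.Arrow) (k : ℕ) : ((Γ.next ^ k) a).fst = a.fst := by
  induction k with
  | zero => rfl
  | succ k ih => rw [pow_succ', Equiv.Perm.mul_apply, Γ.next_fst, ih]

lemma fst_mem_src (a : Γ.Arrow) : a.fst ∈ (src a).1 := by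
  simp [src, SimpleGraph.Dart.edge]

lemma fst_mem_tgt (a : Γ.Arrow) : a.fst ∈ (tgt a).1 := by
  rw [← Γ.next_fst]; exact fst_mem_src _

lemma src_symm (a : Γ.Arrow) : src a.symm = src a := by
  simp [src]

lemma arrow_eq_of_fst_src {a b : Γ.Arrow} (h : a.fst = b.fst) (h' : src a = src b) : a = b := by
  rcases (SimpleGraph.dart_edge_eq_iff a b).1 (congrArg Subtype.val h') with h1 | h1
  · exact h1
  · exact absurd h (by rw [h1]; exact b.adj.ne')

lemma exists_src_eq {x : Γ.QVertex} {p : V} (h : p ∈ x.1) :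
    ∃ a : Γ.Arrow, a.fst = p ∧ src a = x := by
  obtain ⟨x, hx⟩ := x
  obtain ⟨q, rfl⟩ := Sym2.mem_iff_exists.1 h
  exact ⟨⟨(p, q), hx⟩, rfl, rfl⟩

lemma eq_of_mem_mem {x y : Γ.QVertex} (h : x ≠ y) {p q : V} (hpx : p ∈ x.1) (hpy : p ∈ y.1)
    (hqx : q ∈ x.1) (hqy : q ∈ y.1) : p = q := by
  by_contra hpq
  exact h (Subtype.ext (((Sym2.mem_and_mem_iff hpq).1 ⟨hpx, hqx⟩).trans
    ((Sym2.mem_and_mem_iff hpq).1 ⟨hpy, hqy⟩).symm))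

/-- The number of edges at the starting vertex of a dart. -/
noncomputable abbrev period (a : Γ.Arrow) : ℕ := Function.minimalPeriod Γ.next a

lemma next_pow_eq_iterate (a : Γ.Arrow) (k : ℕ) : (Γ.next ^ k) a = Γ.next^[k] a := by
  rw [Equiv.Perm.iterate_eq_pow]

lemma next_pow_period (a : Γ.Arrow) : (Γ.next ^ period a) a = a := by
  rw [next_pow_eq_iterate]; exact Function.iterate_minimalPeriod

lemma next_pow_inj {a : Γ.Arrow} {k l : ℕ} (hk : k < period a) (hl : l < period a)
    (h : (Γ.next ^ k) a = (Γ.next ^ l) a) : k = l := by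
  rw [next_pow_eq_iterate, next_pow_eq_iterate] at h
  exact Function.iterate_injOn_Iio_minimalPeriod hk hl h

lemma next_pow_add_apply (a : Γ.Arrow) (k l : ℕ) :
    (Γ.next ^ (k + l)) a = (Γ.next ^ l) ((Γ.next ^ k) a) := by
  rw [add_comm, pow_add, Equiv.Perm.mul_apply]

section Finite

variable [Finite V]

instance : Finite Γ.Arrow :=
  Finite.of_injective (fun a : Γ.Arrow => a.toProd) SimpleGraph.Dart.toProd_injective

lemma period_pos (a : Γ.Arrow) : 0 < period a :=
  Function.minimalPeriod_pos_of_mem_periodicPts (Γ.next.injective.mem_periodicPts a)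

lemma exists_next_pow_eq {a b : Γ.Arrow} (h : a.fst = b.fst) :
    ∃ k < period a, (Γ.next ^ k) a = b := by
  obtain ⟨n, hn⟩ := (Γ.next_sameCycle a b h).exists_nat_pow_eq
  refine ⟨n % period a, Nat.mod_lt _ (period_pos a), ?_⟩
  rw [next_pow_eq_iterate] at *
  rw [Function.iterate_mod_minimalPeriod_eq, hn]

end Finite

section Algebra

variable {K : Type u} [Field K]

variable (Γ K) in
/-- The projection from the free algebra to the Brauer tree algebra. -/
noncomputable def toAlg : FreeAlgebra K Γ.Gen →ₐ[K] Γ.Alg K := RingQuot.mkAlgHom K (Γ.Rel K)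

lemma toAlg_surjective : Function.Surjective (toAlg Γ K) := RingQuot.mkAlgHom_surjective K (Γ.Rel K)

lemma toAlg_rel {x y : FreeAlgebra K Γ.Gen} (h : Γ.Rel K x y) : toAlg Γ K x = toAlg Γ K y :=
  RingQuot.mkAlgHom_rel K h

lemma toAlg_freeIdem (x : Γ.QVertex) : toAlg Γ K (Γ.freeIdem K x) = Γ.idem K x := rfl

lemma toAlg_freeArrow (a : Γ.Arrow) : toAlg Γ K (Γ.freeArrow K a) = Γ.arrow K a := rfl

lemma idem_mul_self (x : Γ.QVertex) : Γ.idem K x * Γ.idem K x = Γ.idem K x := by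
  simp only [← toAlg_freeIdem, ← map_mul]
  exact toAlg_rel (Rel.idem_mul_self x)

lemma idem_mul_idem {x y : Γ.QVertex} (h : x ≠ y) : Γ.idem K x * Γ.idem K y = 0 := by
  simp only [← toAlg_freeIdem, ← map_mul]
  exact (toAlg_rel (Rel.idem_mul_idem x y h)).trans (map_zero _)

lemma idem_src_mul_arrow (a : Γ.Arrow) : Γ.idem K (src a) * Γ.arrow K a = Γ.arrow K a := by
  simp only [← toAlg_freeIdem, ← toAlg_freeArrow, ← map_mul]
  exact toAlg_rel (Rel.src_mul a)

lemma arrow_mul_idem_tgt (a : Γ.Arrow) : Γ.arrow K a * Γ.idem K (tgt a) = Γ.arrow K a := by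
  simp only [← toAlg_freeIdem, ← toAlg_freeArrow, ← map_mul]
  exact toAlg_rel (Rel.mul_tgt a)

lemma arrow_mul_arrow {a b : Γ.Arrow} (h : a.fst ≠ b.fst) : Γ.arrow K a * Γ.arrow K b = 0 := by
  simp only [← toAlg_freeArrow, ← map_mul]
  exact (toAlg_rel (Rel.arrow_mul_arrow a b h)).trans (map_zero _)

lemma sum_idem [Fintype Γ.QVertex] : ∑ x : Γ.QVertex, Γ.idem K x = 1 := by
  have h := toAlg_rel (Rel.sum_idem (Γ := Γ) (K := K))
  rw [finsum_eq_sum_of_fintype, map_sum, map_one] at h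
  exact h

variable (K) in
/-- The path of length `k` in the Brauer quiver that starts with the arrow `a` and stays on its
cycle, as an element of the Brauer tree algebra. -/
noncomputable def path (a : Γ.Arrow) : ℕ → Γ.Alg K
  | 0 => Γ.idem K (src a)
  | k + 1 => path a k * Γ.arrow K ((Γ.next ^ k) a)

lemma path_zero (a : Γ.Arrow) : path K a 0 = Γ.idem K (src a) := rfl

lemma path_succ (a : Γ.Arrow) (k : ℕ) :
    path K a (k + 1) = path K a k * Γ.arrow K ((Γ.next ^ k) a) := rfl

lemma path_one (a : Γ.Arrow) : path K a 1 = Γ.arrow K a := idem_src_mul_arrow a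

lemma idem_src_mul_path (a : Γ.Arrow) (k : ℕ) : Γ.idem K (src a) * path K a k = path K a k := by
  induction k with
  | zero => exact idem_mul_self _
  | succ k ih => rw [path_succ, ← mul_assoc, ih]

lemma path_mul_idem (a : Γ.Arrow) (k : ℕ) :
    path K a k * Γ.idem K (src ((Γ.next ^ k) a)) = path K a k := by
  cases k with
  | zero => exact idem_mul_self _
  | succ k =>
    rw [path_succ, mul_assoc, pow_succ', Equiv.Perm.mul_apply]
    exact congrArg _ (arrow_mul_idem_tgt _)

lemma path_mul_path (a : Γ.Arrow) (k l : ℕ) :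
    path K a k * path K ((Γ.next ^ k) a) l = path K a (k + l) := by
  induction l with
  | zero => exact path_mul_idem a k
  | succ l ih => rw [path_succ, ← mul_assoc, ih, ← add_assoc, path_succ, next_pow_add_apply]

lemma path_mul_path_eq_zero {a b : Γ.Arrow} (h : a.fst ≠ b.fst) {k l : ℕ} (hk : 0 < k)
    (hl : 0 < l) : path K a k * path K b l = 0 := by
  obtain ⟨k, rfl⟩ := Nat.exists_eq_add_one.2 hk
  obtain ⟨l, rfl⟩ := Nat.exists_eq_add_of_lt hl
  rw [zero_add, add_comm l, ← path_mul_path b, path_one, path_succ, mul_assoc,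
    ← mul_assoc (arrow _ _ _), arrow_mul_arrow (by rwa [next_pow_fst]), zero_mul, mul_zero]

lemma path_eq_idem_mul_prod (a : Γ.Arrow) (k : ℕ) : path K a k = Γ.idem K (src a) *
    ((List.range k).map fun i => Γ.arrow K ((Γ.next ^ i) a)).prod := by
  induction k with
  | zero => simp [path_zero]
  | succ k ih => rw [path_succ, ih, List.range_succ]; simp [mul_assoc]

lemma path_period_symm (a : Γ.Arrow) : path K a (period a) = path K a.symm (period a.symm) := by
  have h := toAlg_rel (Rel.cycle_eq (K := K) a)
  rw [freeCycle, freeCycle, map_list_prod, map_list_prod, List.map_map, List.map_map] at h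
  rw [path_eq_idem_mul_prod, path_eq_idem_mul_prod, src_symm]
  exact congrArg _ h

variable [Finite V]

lemma path_eq_zero {a : Γ.Arrow} {k : ℕ} (hk : period a < k) : path K a k = 0 := by
  obtain ⟨l, rfl⟩ := Nat.exists_eq_add_of_lt hk
  rw [add_assoc, ← path_mul_path, next_pow_period, path_period_symm]
  exact path_mul_path_eq_zero (by exact a.adj.ne') (period_pos _) (by omega)

lemma span_path_eq_top : Submodule.span K {z | ∃ (a : Γ.Arrow) (k : ℕ), z = path K a k} = ⊤ := by
  set S := Submodule.span K {z | ∃ (a : Γ.Arrow) (k : ℕ), z = path K a k}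
  have hpath (a : Γ.Arrow) (k : ℕ) : path K a k ∈ S := Submodule.subset_span ⟨a, k, rfl⟩
  have key (z : FreeAlgebra K Γ.Gen) : ∀ s ∈ S, s * toAlg Γ K z ∈ S := by
    induction z using FreeAlgebra.induction with
    | grade0 r =>
      intro s hs
      rw [AlgHom.commutes, ← Algebra.commutes, ← Algebra.smul_def]
      exact S.smul_mem r hs
    | mul x y hx hy =>
      intro s hs
      rw [map_mul, ← mul_assoc]
      exact hy _ (hx _ hs)
    | add x y hx hy =>
      intro s hs
      rw [map_add, mul_add]
      exact S.add_mem (hx _ hs) (hy _ hs)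
    | grade1 g =>
      intro s hs
      induction hs using Submodule.span_induction with
      | zero => rw [zero_mul]; exact S.zero_mem
      | add x y _ _ hx hy => rw [add_mul]; exact S.add_mem hx hy
      | smul r x _ hx => rw [smul_mul_assoc]; exact S.smul_mem r hx
      | mem x hx =>
        obtain ⟨a, k, rfl⟩ := hx
        cases g with
        | idem x =>
          change path K a k * Γ.idem K x ∈ S
          by_cases h : src ((Γ.next ^ k) a) = x
          · rw [← h, path_mul_idem]; exact hpath a k
          · rw [← path_mul_idem, mul_assoc, idem_mul_idem h, mul_zero]; exact S.zero_mem
        | arrow b =>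
          change path K a k * Γ.arrow K b ∈ S
          by_cases h : (Γ.next ^ k) a = b
          · rw [← h, ← path_succ]; exact hpath a _
          by_cases hb : src ((Γ.next ^ k) a) = src b
          · have hfst : a.fst ≠ b.fst := fun h' =>
              h (arrow_eq_of_fst_src (by rwa [next_pow_fst]) hb)
            cases k with
            | zero =>
              rw [path_zero, show src a = src b from hb, idem_src_mul_arrow, ← path_one]
              exact hpath b 1
            | succ k =>
              rw [← path_one, path_mul_path_eq_zero hfst (by omega) one_pos]; exact S.zero_mem
          · rw [← path_mul_idem, ← idem_src_mul_arrow b, mul_assoc, ← mul_assoc (idem _ _ _),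
              idem_mul_idem hb, zero_mul, mul_zero]
            exact S.zero_mem
  have h1 : (1 : Γ.Alg K) ∈ S := by
    have := Fintype.ofFinite Γ.QVertex
    rw [← sum_idem]
    refine S.sum_mem fun x _ => ?_
    obtain ⟨⟨p, q⟩, hx⟩ := x
    exact hpath (⟨(p, q), hx⟩ : Γ.Arrow) 0
  rw [eq_top_iff]
  intro z _
  obtain ⟨z, rfl⟩ := toAlg_surjective z
  have := key z 1 h1
  rwa [one_mul] at this

/-- The spaces `e_x A e_y` for distinct `x` and `y` are spanned by a single path. -/
lemma eq_zero_or_eq_smul_path {x y : Γ.QVertex} (hxy : x ≠ y) {z : Γ.Alg K}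
    (hz : Γ.idem K x * z * Γ.idem K y = z) :
    z = 0 ∨ ∃ (a : Γ.Arrow) (k : ℕ) (c : K), src a = x ∧ src ((Γ.next ^ k) a) = y ∧ 0 < k ∧
      k < period a ∧ c ≠ 0 ∧ z = c • path K a k := by
  suffices h : ∀ z : Γ.Alg K, Γ.idem K x * z * Γ.idem K y = 0 ∨
      ∃ (a : Γ.Arrow) (k : ℕ) (c : K), src a = x ∧ src ((Γ.next ^ k) a) = y ∧ 0 < k ∧
        k < period a ∧ c ≠ 0 ∧ Γ.idem K x * z * Γ.idem K y = c • path K a k by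
    have := h z
    rwa [hz] at this
  intro z
  have hz : z ∈ Submodule.span K {z | ∃ (a : Γ.Arrow) (k : ℕ), z = path K a k} := by
    rw [span_path_eq_top]; trivial
  induction hz using Submodule.span_induction with
  | zero => left; simp
  | smul r z _ h =>
    by_cases hr : r = 0
    · left; simp [hr]
    rw [mul_smul_comm, smul_mul_assoc]
    rcases h with h | ⟨a, k, c, h1, h2, h3, h4, h5, h6⟩
    · left; rw [h, smul_zero]
    · exact .inr ⟨a, k, r * c, h1, h2, h3, h4, mul_ne_zero hr h5, by rw [h6, smul_smul]⟩
  | add z w _ _ hz hw =>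
    rw [mul_add, add_mul]
    rcases hz with hz | ⟨a, k, c, h1, h2, h3, h4, h5, h6⟩
    · rwa [hz, zero_add]
    rcases hw with hw | ⟨b, l, d, g1, g2, g3, g4, g5, g6⟩
    · rw [hw, add_zero]; exact .inr ⟨a, k, c, h1, h2, h3, h4, h5, h6⟩
    have hab : a = b := by
      refine arrow_eq_of_fst_src (eq_of_mem_mem hxy ?_ ?_ ?_ ?_) (h1.trans g1.symm)
      · rw [← h1]; exact fst_mem_src a
      · rw [← h2, ← next_pow_fst a k]; exact fst_mem_src _
      · rw [← g1]; exact fst_mem_src b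
      · rw [← g2, ← next_pow_fst b l]; exact fst_mem_src _
    subst hab
    have hkl : k = l := next_pow_inj h4 g4
      (arrow_eq_of_fst_src (by rw [next_pow_fst, next_pow_fst]) (h2.trans g2.symm))
    subst hkl
    rw [h6, g6, ← add_smul]
    by_cases hcd : c + d = 0
    · left; rw [hcd, zero_smul]
    · exact .inr ⟨a, k, c + d, h1, h2, h3, h4, hcd, rfl⟩
  | mem z hz =>
    obtain ⟨a, k, rfl⟩ := hz
    by_cases h1 : src a = x
    · by_cases h2 : src ((Γ.next ^ k) a) = y
      · rw [← h1, ← h2, idem_src_mul_path, path_mul_idem]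
        by_cases h3 : period a < k
        · exact .inl (path_eq_zero h3)
        have hk0 : k ≠ 0 := by
          rintro rfl
          exact hxy (h1.symm.trans h2)
        have hkp : k ≠ period a := by
          rintro rfl
          rw [next_pow_period] at h2
          exact hxy (h1.symm.trans h2)
        exact .inr ⟨a, k, 1, rfl, rfl, by omega, by omega, one_ne_zero, (one_smul _ _).symm⟩
      · left; rw [← path_mul_idem, mul_assoc, mul_assoc, idem_mul_idem h2, mul_zero, mul_zero]
    · left; rw [← idem_src_mul_path, ← mul_assoc, idem_mul_idem (Ne.symm h1), zero_mul, zero_mul]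

open Classical in
/-- The image of a generator under the representation that makes the cycle of `l` uniserial by
killing the arrow `l`. -/
noncomputable def repGen (K : Type u) [Field K] (l : Γ.Arrow) :
    Γ.Gen → Matrix Γ.QVertex Γ.QVertex K
  | .idem x => Matrix.single x x 1
  | .arrow a => if a.fst = l.fst ∧ a ≠ l then Matrix.single (src a) (tgt a) 1 else 0

open Classical in
lemma exists_rep [Fintype Γ.QVertex] (l : Γ.Arrow) :
    ∃ ρ : Γ.Alg K →ₐ[K] Matrix Γ.QVertex Γ.QVertex K,
      (∀ x, ρ (Γ.idem K x) = Matrix.single x x 1) ∧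
      ∀ a, ρ (Γ.arrow K a) =
        if a.fst = l.fst ∧ a ≠ l then Matrix.single (src a) (tgt a) 1 else 0 := by
  let f : FreeAlgebra K Γ.Gen →ₐ[K] Matrix Γ.QVertex Γ.QVertex K :=
    FreeAlgebra.lift K (repGen K l)
  have hidem (x : Γ.QVertex) : f (Γ.freeIdem K x) = Matrix.single x x 1 :=
    FreeAlgebra.lift_ι_apply _ _
  have harrow (a : Γ.Arrow) : f (Γ.freeArrow K a) =
      if a.fst = l.fst ∧ a ≠ l then Matrix.single (src a) (tgt a) 1 else 0 :=
    FreeAlgebra.lift_ι_apply _ _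
  have hcycle (a : Γ.Arrow) : f (Γ.freeCycle K a) = 0 := by
    rw [freeCycle, map_list_prod, List.map_map]
    apply List.prod_eq_zero
    rw [List.mem_map]
    by_cases h : a.fst = l.fst
    · obtain ⟨k, hk, rfl⟩ := exists_next_pow_eq h
      exact ⟨k, List.mem_range.2 hk, by simp [harrow]⟩
    · exact ⟨0, List.mem_range.2 (period_pos a), by simp [harrow, h]⟩
  refine ⟨RingQuot.liftAlgHom K ⟨f, ?_⟩, fun x => ?_, fun a => ?_⟩
  · intro x y h
    cases h with
    | idem_mul_self x => simp [hidem]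
    | idem_mul_idem x y h => simp [hidem, h]
    | sum_idem =>
      rw [finsum_eq_sum_of_fintype, map_sum, map_one]
      simp only [hidem]
      exact Matrix.sum_single_one
    | src_mul a => rw [map_mul, hidem, harrow]; split_ifs <;> simp
    | mul_tgt a => rw [map_mul, hidem, harrow]; split_ifs <;> simp
    | arrow_mul_arrow a b h =>
      rw [map_mul, harrow, harrow, map_zero]
      split_ifs with h1 h2
      · exact absurd (h1.1.trans h2.1.symm) h
      all_goals simp
    | cycle_eq a => rw [hcycle, hcycle]
  · exact (RingQuot.liftAlgHom_mkAlgHom_apply K _ _ _).trans (hidem x)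
  · exact (RingQuot.liftAlgHom_mkAlgHom_apply K _ _ _).trans (harrow a)

lemma path_ne_zero {a : Γ.Arrow} {k : ℕ} (hk : k < period a) : path K a k ≠ 0 := by
  classical
  have := Fintype.ofFinite Γ.QVertex
  obtain ⟨ρ, h1, h2⟩ := exists_rep (K := K) ((Γ.next ^ k) a)
  have key : ∀ j ≤ k, ρ (path K a j) = Matrix.single (src a) (src ((Γ.next ^ j) a)) 1 := by
    intro j hj
    induction j with
    | zero => exact h1 _
    | succ j ih =>
      rw [path_succ, map_mul, ih (by omega), h2, if_pos, pow_succ', Equiv.Perm.mul_apply]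
      · simp [tgt]
      · refine ⟨by rw [next_pow_fst, next_pow_fst], fun h => ?_⟩
        have := next_pow_inj (by omega) hk h
        omega
  intro h
  have h3 := key k le_rfl
  rw [h, map_zero] at h3
  have := congrFun (congrFun h3 (src a)) (src ((Γ.next ^ k) a))
  simp at this

end Algebra

end BrauerTree

namespace BrauerTree

variable {V : Type v} {Γ : BrauerTree V} {K : Type u} [Field K]

section ACycles

lemma fst_eq_of_arrow_mul_arrow_ne_zero {a b : Γ.Arrow} (h : Γ.arrow K a * Γ.arrow K b ≠ 0) :
    a.fst = b.fst := by
  by_contra h'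
  exact h (arrow_mul_arrow h')

lemma next_eq_of_arrow_mul_arrow_ne_zero {a b : Γ.Arrow} (h : Γ.arrow K a * Γ.arrow K b ≠ 0) :
    Γ.next a = b := by
  refine arrow_eq_of_fst_src ((Γ.next_fst a).trans (fst_eq_of_arrow_mul_arrow_ne_zero h)) ?_
  by_contra h'
  apply h
  rw [← arrow_mul_idem_tgt, ← idem_src_mul_arrow b, mul_assoc, ← mul_assoc (idem _ _ _),
    idem_mul_idem (x := tgt a) h', zero_mul, mul_zero]

lemma IsNonzeroChain.fst_eq {c : List Γ.Arrow} (hc : Γ.IsNonzeroChain K c) {a b : Γ.Arrow}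
    (ha : a ∈ c) (hb : b ∈ c) : a.fst = b.fst := by
  have h : c.IsChain fun a b => a.fst = b.fst :=
    hc.2.imp fun _ _ => fst_eq_of_arrow_mul_arrow_ne_zero
  have : IsTrans Γ.Arrow fun a b => a.fst = b.fst := ⟨fun _ _ _ => Eq.trans⟩
  have : Std.Symm fun a b : Γ.Arrow => a.fst = b.fst := ⟨fun _ _ => Eq.symm⟩
  exact h.pairwise.forall_of_forall (R := fun a b : Γ.Arrow => a.fst = b.fst) (fun _ _ => rfl) ha hb

lemma SameACycle.fst_eq {a b : Γ.Arrow} (h : Γ.SameACycle K a b) : a.fst = b.fst := by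
  obtain ⟨c, hc, ha, hb⟩ := h
  exact hc.1.fst_eq ha hb

variable [Finite V]

lemma IsACycle.next_mem {c : List Γ.Arrow} (hc : Γ.IsACycle K c) {a : Γ.Arrow} (ha : a ∈ c)
    (hp : 2 < period a) : Γ.next a ∈ c := by
  obtain ⟨l₁, l₂, rfl⟩ := List.append_of_mem ha
  cases l₂ with
  | cons b l₂ =>
    have h := hc.1.2
    rw [List.isChain_append] at h
    have h := h.2.1
    rw [List.isChain_cons_cons] at h
    rw [next_eq_of_arrow_mul_arrow_ne_zero h.1]
    simp
  | nil =>
    by_contra hn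
    have := hc.2 (l₁ ++ [a] ++ [Γ.next a]) ⟨?_, ?_⟩ (List.sublist_append_left _ _)
    · simp at this
    · exact List.nodup_append.2 ⟨hc.1.1, by simp, by
        intro x hx y hy
        rw [List.mem_singleton] at hy
        rintro rfl
        exact hn (hy ▸ hx)⟩
    · rw [List.isChain_append]
      refine ⟨hc.1.2, by simp, ?_⟩
      have h := path_ne_zero (K := K) hp
      rw [path_succ, path_one, pow_one] at h
      simpa using h

/-- The vertices of an `A`-cycle are the edges at a vertex of the tree. -/
lemma IsACycle.exists_onCycle_iff {c : List Γ.Arrow} (hc : Γ.IsACycle K c) (hne : c ≠ []) :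
    ∃ p : V, ∀ x : Γ.QVertex, OnCycle c x ↔ p ∈ x.1 := by
  obtain ⟨a, ha⟩ := List.exists_mem_of_ne_nil c hne
  refine ⟨a.fst, fun x => ⟨?_, fun hx => ?_⟩⟩
  · rintro ⟨b, hb, rfl | rfl⟩
    · rw [hc.1.fst_eq ha hb]; exact fst_mem_src b
    · rw [hc.1.fst_eq ha hb]; exact fst_mem_tgt b
  · obtain ⟨b, hb, rfl⟩ := exists_src_eq hx
    obtain ⟨k, hk, rfl⟩ := exists_next_pow_eq hb.symm
    by_cases hp : 2 < period a
    · refine ⟨_, ?_, .inl rfl⟩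
      clear hk hb hx
      induction k with
      | zero => exact ha
      | succ k ih =>
        rw [pow_succ', Equiv.Perm.mul_apply]
        refine hc.next_mem ih ?_
        rwa [period, next_pow_eq_iterate, Function.minimalPeriod_apply_iterate
          (Γ.next.injective.mem_periodicPts a)]
    · obtain rfl | rfl : k = 0 ∨ k = 1 := by omega
      · exact ⟨a, ha, .inl rfl⟩
      · exact ⟨a, ha, .inr rfl⟩

end ACycles

section Walks

lemma exists_walk_edges_eq (x : Γ.QVertex) {p q : V} (hp : p ∈ x.1) (hq : q ∈ x.1) :
    ∃ W : Γ.graph.Walk p q, ∀ e ∈ W.edges, e = x.1 := by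
  by_cases h : p = q
  · subst h
    exact ⟨.nil, by simp⟩
  · obtain ⟨x, hx⟩ := x
    obtain rfl := (Sym2.mem_and_mem_iff h).1 ⟨hp, hq⟩
    have hadj : Γ.graph.Adj p q := hx
    exact ⟨hadj.toWalk, by simp⟩

lemma mem_edges_of_walk {x : Γ.QVertex} {p q : V} (hp : p ∈ x.1) (hq : q ∈ x.1) (h : p ≠ q)
    (W : Γ.graph.Walk p q) : x.1 ∈ W.edges := by
  obtain ⟨x, hx⟩ := x
  obtain rfl := (Sym2.mem_and_mem_iff h).1 ⟨hp, hq⟩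
  have hb := SimpleGraph.isAcyclic_iff_forall_isBridge.1 Γ.isTree.2 hx
  exact SimpleGraph.isBridge_iff_forall_walk_mem_edges.1 hb W

lemma exists_mem_edges_of_walks {p q : V} (h : p ≠ q) (W W' : Γ.graph.Walk p q) :
    ∃ e ∈ W.edges, e ∈ W'.edges := by
  classical
  have hW := (Γ.isTree.2.subsingleton_path p q).elim W.toPath W'.toPath
  have hne : (W.toPath : Γ.graph.Walk p q).edges ≠ [] := by
    intro h'
    cases hP : (W.toPath : Γ.graph.Walk p q) with
    | nil => exact h rfl
    | cons _ _ => rw [hP] at h'; simp at h'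
  obtain ⟨e, he⟩ := List.exists_mem_of_ne_nil _ hne
  exact ⟨e, W.edges_toPath_subset_edges he, W'.edges_toPath_subset_edges (hW ▸ he)⟩

end Walks

namespace Diagram

variable (Θ : Γ.Diagram K)

/-- A numbering of the vertices and arrows of a diagram along the path. -/
structure Indexing where
  length : ℕ
  vertex : ℕ → Γ.QVertex
  arrow : ℕ → Γ.Arrow
  length_pos : 0 < length
  mem_vertices : ∀ x, x ∈ Θ.vertices ↔ ∃ i ≤ length, vertex i = x
  mem_arrows : ∀ a, a ∈ Θ.arrows ↔ ∃ i < length, arrow i = a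
  isEndpoint_zero : Θ.IsEndpoint (vertex 0)
  isEndpoint_length : Θ.IsEndpoint (vertex length)
  inj : ∀ i ≤ length, ∀ j ≤ length, vertex i = vertex j → i = j
  step : ∀ i < length, (src (arrow i) = vertex i ∧ tgt (arrow i) = vertex (i + 1)) ∨
    (tgt (arrow i) = vertex i ∧ src (arrow i) = vertex (i + 1))
  fst_eq_of_forward : ∀ i, i + 1 < length → tgt (arrow i) = vertex (i + 1) →
    src (arrow (i + 1)) = vertex (i + 1) → (arrow i).fst = (arrow (i + 1)).fst
  fst_eq_of_backward : ∀ i, i + 1 < length → src (arrow i) = vertex (i + 1) →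
    tgt (arrow (i + 1)) = vertex (i + 1) → (arrow i).fst = (arrow (i + 1)).fst

lemma length_stepVertices {l : List Γ.Step} (h : l ≠ []) :
    (stepVertices l).length = l.length + 1 := by
  cases l with
  | nil => exact absurd rfl h
  | cons s l => simp [stepVertices]

lemma getElem?_succ_stepVertices (l : List Γ.Step) (i : ℕ) :
    (stepVertices l)[i + 1]? = l[i]?.map Step.finish := by
  cases l with
  | nil => simp [stepVertices]
  | cons s l => simp only [stepVertices, List.getElem?_cons_succ, List.getElem?_map]

lemma getElem?_stepVertices {l : List Γ.Step}
    (h : l.IsChain fun s t => Step.finish s = Step.start t) {i : ℕ} (hi : i < l.length) :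
    (stepVertices l)[i]? = some (Step.start l[i]) := by
  cases i with
  | zero =>
    cases l with
    | nil => simp at hi
    | cons s l => simp [stepVertices]
  | succ i =>
    rw [getElem?_succ_stepVertices, List.getElem?_eq_getElem (by omega), Option.map_some,
      List.isChain_iff_getElem.1 h i hi]

lemma nonempty_indexing : Nonempty Θ.Indexing := by
  have hlen := length_stepVertices Θ.steps_ne_nil
  have hpos : 0 < Θ.steps.length := List.length_pos_iff.2 Θ.steps_ne_nil
  let s₀ := Θ.steps[0]
  let v (i : ℕ) : Γ.QVertex := Θ.vertices.getD i (Step.start s₀)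
  let s (i : ℕ) : Γ.Step := Θ.steps.getD i s₀
  have hs {i : ℕ} (hi : i < Θ.steps.length) : s i = Θ.steps[i] := by simp [s, hi]
  have hv {i : ℕ} (hi : i ≤ Θ.steps.length) : Θ.vertices[i]? = some (v i) := by
    have : i < Θ.vertices.length := by rw [vertices, hlen]; omega
    simp [v, this]
  have hstart {i : ℕ} (hi : i < Θ.steps.length) : Step.start (s i) = v i := by
    have h := getElem?_stepVertices Θ.connected hi
    rw [← vertices, hv hi.le, Option.some_inj] at h
    rw [h, hs hi]
  have hfinish {i : ℕ} (hi : i < Θ.steps.length) : Step.finish (s i) = v (i + 1) := by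
    have h := getElem?_succ_stepVertices Θ.steps i
    rw [← vertices, hv hi, List.getElem?_eq_getElem hi, Option.map_some, Option.some_inj] at h
    rw [h, hs hi]
  have hinj : ∀ i ≤ Θ.steps.length, ∀ j ≤ Θ.steps.length, v i = v j → i = j := by
    intro i hi j hj h
    have hi' : i < Θ.vertices.length := by rw [vertices, hlen]; omega
    refine (List.getElem?_inj hi' Θ.nodup).1 ?_
    exact (hv hi).trans ((congrArg some h).trans (hv hj).symm)
  have hstep : ∀ i < Θ.steps.length,
      (src (s i).1 = v i ∧ tgt (s i).1 = v (i + 1) ∧ (s i).2 = true) ∨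
      (tgt (s i).1 = v i ∧ src (s i).1 = v (i + 1) ∧ (s i).2 = false) := by
    intro i hi
    have h1 := hstart hi
    have h2 := hfinish hi
    cases h : (s i).2 with
    | true => left; simpa [Step.start, Step.finish, h] using And.intro h1 h2
    | false => right; simpa [Step.start, Step.finish, h] using And.intro h1 h2
  have hturn (i : ℕ) (hi : i + 1 < Θ.steps.length) (h : (s i).2 = (s (i + 1)).2) :
      (s i).1.fst = (s (i + 1)).1.fst := by
    have h1 := List.isChain_iff_getElem.1 Θ.turns i hi
    rw [← hs hi, ← hs (by omega)] at h1
    by_contra h2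
    exact h1.2 (fun h3 => h2 h3.fst_eq) h
  refine ⟨⟨Θ.steps.length, v, fun i => (s i).1, hpos, ?_, ?_, ?_, ?_, hinj, ?_, ?_, ?_⟩⟩
  · intro x
    rw [List.mem_iff_getElem?]
    constructor
    · rintro ⟨i, hi⟩
      have : i < Θ.vertices.length := (List.getElem?_eq_some_iff.1 hi).1
      rw [vertices, hlen] at this
      refine ⟨i, by omega, ?_⟩
      rwa [hv (by omega), Option.some_inj] at hi
    · rintro ⟨i, hi, rfl⟩
      exact ⟨i, hv hi⟩
  · intro a
    rw [arrows, List.mem_map]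
    constructor
    · rintro ⟨t, ht, rfl⟩
      obtain ⟨i, hi, rfl⟩ := List.mem_iff_getElem.1 ht
      exact ⟨i, hi, by rw [hs hi]⟩
    · rintro ⟨i, hi, rfl⟩
      exact ⟨_, by rw [hs hi]; exact List.getElem_mem hi, rfl⟩
  · left
    rw [List.head?_eq_getElem?, hv (by omega)]
  · right
    rw [List.getLast?_eq_getElem?, vertices, hlen, ← vertices]
    exact hv le_rfl
  · intro i hi
    rcases hstep i hi with ⟨h1, h2, -⟩ | ⟨h1, h2, -⟩
    · exact .inl ⟨h1, h2⟩
    · exact .inr ⟨h1, h2⟩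
  · intro i hi h1 h2
    apply hturn i hi
    rcases hstep i (by omega) with ⟨g1, g2, g3⟩ | ⟨g1, g2, g3⟩
    · rcases hstep (i + 1) hi with ⟨f1, f2, f3⟩ | ⟨f1, f2, f3⟩
      · rw [g3, f3]
      · have := hinj _ (by omega) _ (by omega) (h2.symm.trans f2)
        omega
    · have := hinj _ (by omega) _ (by omega) (h1.symm.trans g1)
      omega
  · intro i hi h1 h2
    apply hturn i hi
    rcases hstep i (by omega) with ⟨g1, g2, g3⟩ | ⟨g1, g2, g3⟩
    · have := hinj _ (by omega) _ (by omega) (h1.symm.trans g1)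
      omega
    · rcases hstep (i + 1) hi with ⟨f1, f2, f3⟩ | ⟨f1, f2, f3⟩
      · have := hinj _ (by omega) _ (by omega) (h2.symm.trans f2)
        omega
      · rw [g3, f3]

end Diagram

end BrauerTree

namespace BrauerTree

variable {V : Type v} {Γ : BrauerTree V} {K : Type u} [Field K]

namespace Diagram

variable {Θ : Γ.Diagram K}

namespace Indexing

variable (ι : Θ.Indexing)

lemma src_ne_tgt {i : ℕ} (hi : i < ι.length) : src (ι.arrow i) ≠ tgt (ι.arrow i) := by
  intro h
  rcases ι.step i hi with ⟨h1, h2⟩ | ⟨h1, h2⟩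
  · have := ι.inj _ hi.le _ hi (h1.symm.trans (h.trans h2))
    omega
  · have := ι.inj _ hi.le _ hi (h1.symm.trans (h.symm.trans h2))
    omega

lemma fst_mem_vertex {i : ℕ} (hi : i < ι.length) : (ι.arrow i).fst ∈ (ι.vertex i).1 := by
  rcases ι.step i hi with ⟨h1, h2⟩ | ⟨h1, h2⟩
  · rw [← h1]; exact fst_mem_src _
  · rw [← h1]; exact fst_mem_tgt _

lemma fst_mem_vertex_succ {i : ℕ} (hi : i < ι.length) :
    (ι.arrow i).fst ∈ (ι.vertex (i + 1)).1 := by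
  rcases ι.step i hi with ⟨h1, h2⟩ | ⟨h1, h2⟩
  · rw [← h2]; exact fst_mem_tgt _
  · rw [← h2]; exact fst_mem_src _

lemma touches {i : ℕ} (hi : i < ι.length) :
    src (ι.arrow i) = ι.vertex i ∨ tgt (ι.arrow i) = ι.vertex i :=
  (ι.step i hi).imp And.left And.left

lemma touches_succ {i : ℕ} (hi : i < ι.length) :
    src (ι.arrow i) = ι.vertex (i + 1) ∨ tgt (ι.arrow i) = ι.vertex (i + 1) :=
  ((ι.step i hi).imp And.right And.right).symm

/-- Two tree vertices of the diagram are joined by a walk along edges of the diagram. -/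
lemma exists_walk {i j : ℕ} (hij : i ≤ j) (hj : j ≤ ι.length) {p q : V}
    (hp : p ∈ (ι.vertex i).1) (hq : q ∈ (ι.vertex j).1) :
    ∃ W : Γ.graph.Walk p q, ∀ e ∈ W.edges, ∃ k, i ≤ k ∧ k ≤ j ∧ e = (ι.vertex k).1 := by
  induction j, hij using Nat.le_induction generalizing q with
  | base =>
    obtain ⟨W, hW⟩ := exists_walk_edges_eq _ hp hq
    exact ⟨W, fun e he => ⟨i, le_rfl, le_rfl, hW e he⟩⟩
  | succ j hij ih =>
    obtain ⟨W, hW⟩ := ih (by omega) (ι.fst_mem_vertex hj)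
    obtain ⟨W', hW'⟩ := exists_walk_edges_eq _ (ι.fst_mem_vertex_succ hj) hq
    refine ⟨W.append W', fun e he => ?_⟩
    rw [SimpleGraph.Walk.edges_append, List.mem_append] at he
    rcases he with he | he
    · obtain ⟨k, h1, h2, h3⟩ := hW e he
      exact ⟨k, h1, by omega, h3⟩
    · exact ⟨j + 1, by omega, le_rfl, hW' e he⟩

lemma fst_eq_of_mem_vertex {i j : ℕ} (hij : i < j) (hj : j ≤ ι.length) {p : V}
    (hpi : p ∈ (ι.vertex i).1) (hpj : p ∈ (ι.vertex j).1) : (ι.arrow i).fst = p := by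
  by_contra h
  obtain ⟨W, hW⟩ := ι.exists_walk hij hj (ι.fst_mem_vertex_succ (hij.trans_le hj)) hpj
  obtain ⟨k, h1, h2, h3⟩ := hW _ (mem_edges_of_walk (ι.fst_mem_vertex (hij.trans_le hj)) hpi h W)
  have := ι.inj _ (by omega) _ (by omega) (Subtype.ext h3)
  omega

lemma fst_eq_of_mem_vertex_succ {i j : ℕ} (hij : i < j + 1) (hj : j < ι.length) {p : V}
    (hpi : p ∈ (ι.vertex i).1) (hpj : p ∈ (ι.vertex (j + 1)).1) : (ι.arrow j).fst = p := by
  by_contra h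
  obtain ⟨W, hW⟩ := ι.exists_walk (Nat.le_of_lt_succ hij) hj.le hpi (ι.fst_mem_vertex hj)
  obtain ⟨k, h1, h2, h3⟩ :=
    hW _ (mem_edges_of_walk hpj (ι.fst_mem_vertex_succ hj) (Ne.symm h) W)
  have := ι.inj _ (by omega) _ (by omega) (Subtype.ext h3)
  omega

end Indexing

lemma src_mem_vertices {a : Γ.Arrow} (ha : a ∈ Θ.arrows) : src a ∈ Θ.vertices := by
  obtain ⟨ι⟩ := Θ.nonempty_indexing
  obtain ⟨i, hi, rfl⟩ := (ι.mem_arrows a).1 ha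
  rw [ι.mem_vertices]
  rcases ι.step i hi with ⟨h1, h2⟩ | ⟨h1, h2⟩
  · exact ⟨i, hi.le, h1.symm⟩
  · exact ⟨i + 1, hi, h2.symm⟩

lemma tgt_mem_vertices {a : Γ.Arrow} (ha : a ∈ Θ.arrows) : tgt a ∈ Θ.vertices := by
  obtain ⟨ι⟩ := Θ.nonempty_indexing
  obtain ⟨i, hi, rfl⟩ := (ι.mem_arrows a).1 ha
  rw [ι.mem_vertices]
  rcases ι.step i hi with ⟨h1, h2⟩ | ⟨h1, h2⟩
  · exact ⟨i + 1, hi, h2.symm⟩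
  · exact ⟨i, hi.le, h1.symm⟩

/-- Of two edges of a diagram meeting at a vertex of the tree, each is an end of an arrow of the
diagram around that vertex. -/
lemma exists_arrow_of_mem_mem {x y : Γ.QVertex} (hx : x ∈ Θ.vertices) (hy : y ∈ Θ.vertices)
    (hxy : x ≠ y) {p : V} (hpx : p ∈ x.1) (hpy : p ∈ y.1) :
    ∃ a ∈ Θ.arrows, a.fst = p ∧ (src a = x ∨ tgt a = x) := by
  obtain ⟨ι⟩ := Θ.nonempty_indexing
  obtain ⟨i, hi, rfl⟩ := (ι.mem_vertices x).1 hx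
  obtain ⟨j, hj, rfl⟩ := (ι.mem_vertices y).1 hy
  rcases lt_trichotomy i j with h | rfl | h
  · exact ⟨_, (ι.mem_arrows _).2 ⟨i, h.trans_le hj, rfl⟩, ι.fst_eq_of_mem_vertex h hj hpx hpy,
      ι.touches (h.trans_le hj)⟩
  · exact absurd rfl hxy
  · obtain ⟨i, rfl⟩ := Nat.exists_eq_add_one.2 (Nat.zero_lt_of_lt h)
    exact ⟨_, (ι.mem_arrows _).2 ⟨i, hi, rfl⟩, ι.fst_eq_of_mem_vertex_succ h hi hpy hpx,
      ι.touches_succ hi⟩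

lemma exists_walk_of_mem_vertices {x y : Γ.QVertex} (hx : x ∈ Θ.vertices) (hy : y ∈ Θ.vertices)
    {p q : V} (hp : p ∈ x.1) (hq : q ∈ y.1) :
    ∃ W : Γ.graph.Walk p q, ∀ e ∈ W.edges, ∃ z ∈ Θ.vertices, e = z.1 := by
  obtain ⟨ι⟩ := Θ.nonempty_indexing
  obtain ⟨i, hi, rfl⟩ := (ι.mem_vertices x).1 hx
  obtain ⟨j, hj, rfl⟩ := (ι.mem_vertices y).1 hy
  rcases le_total i j with h | h
  · obtain ⟨W, hW⟩ := ι.exists_walk h hj hp hq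
    refine ⟨W, fun e he => ?_⟩
    obtain ⟨k, -, hk, rfl⟩ := hW e he
    exact ⟨_, (ι.mem_vertices _).2 ⟨k, hk.trans hj, rfl⟩, rfl⟩
  · obtain ⟨W, hW⟩ := ι.exists_walk h hi hq hp
    refine ⟨W.reverse, fun e he => ?_⟩
    rw [SimpleGraph.Walk.edges_reverse, List.mem_reverse] at he
    obtain ⟨k, -, hk, rfl⟩ := hW e he
    exact ⟨_, (ι.mem_vertices _).2 ⟨k, hk.trans hi, rfl⟩, rfl⟩

/-- Diagrams without common vertices meet in at most one vertex of the tree. -/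
lemma eq_of_disjoint {Θ' : Γ.Diagram K} (hdisj : ∀ x ∈ Θ.vertices, x ∉ Θ'.vertices)
    {x y x' y' : Γ.QVertex} (hx : x ∈ Θ.vertices) (hy : y ∈ Θ.vertices) (hx' : x' ∈ Θ'.vertices)
    (hy' : y' ∈ Θ'.vertices) {p q : V} (hpx : p ∈ x.1) (hpx' : p ∈ x'.1) (hqy : q ∈ y.1)
    (hqy' : q ∈ y'.1) : p = q := by
  by_contra h
  obtain ⟨W, hW⟩ := exists_walk_of_mem_vertices hx hy hpx hqy
  obtain ⟨W', hW'⟩ := exists_walk_of_mem_vertices hx' hy' hpx' hqy'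
  obtain ⟨e, he, he'⟩ := exists_mem_edges_of_walks h W W'
  obtain ⟨z, hz, rfl⟩ := hW e he
  obtain ⟨z', hz', h'⟩ := hW' _ he'
  exact hdisj z hz (Subtype.ext h' ▸ hz')

lemma next_eq_of_tgt_eq_src {a b : Γ.Arrow} (ha : a ∈ Θ.arrows) (hb : b ∈ Θ.arrows)
    (h : tgt a = src b) : Γ.next a = b := by
  suffices hfst : a.fst = b.fst from arrow_eq_of_fst_src ((Γ.next_fst a).trans hfst) h
  obtain ⟨ι⟩ := Θ.nonempty_indexing
  obtain ⟨i, hi, rfl⟩ := (ι.mem_arrows a).1 ha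
  obtain ⟨j, hj, rfl⟩ := (ι.mem_arrows b).1 hb
  rcases ι.step i hi with ⟨h1, h2⟩ | ⟨h1, h2⟩ <;> rcases ι.step j hj with ⟨g1, g2⟩ | ⟨g1, g2⟩
  · obtain rfl := ι.inj _ hi _ hj.le (h2.symm.trans (h.trans g1))
    exact ι.fst_eq_of_forward i hj h2 g1
  · have := ι.inj _ hi _ hj (h2.symm.trans (h.trans g2))
    obtain rfl : i = j := by omega
    rfl
  · obtain rfl := ι.inj _ hi.le _ hj.le (h1.symm.trans (h.trans g1))
    rfl
  · obtain rfl := ι.inj _ hi.le _ hj (h1.symm.trans (h.trans g2))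
    exact (ι.fst_eq_of_backward j hi g2 h1).symm

/-- A source or sink of a diagram at a vertex `p` of the tree is an end point of the diagram and
the only vertex of the diagram at `p`, unless it is an end of an arrow around `p`. -/
lemma isEndpoint_and_eq_of_no_arrow {t : Γ.QVertex} (ht : Θ.IsSink t ∨ Θ.IsSource t) {p : V}
    (hp : p ∈ t.1) (h : ∀ a ∈ Θ.arrows, a.fst = p → src a ≠ t ∧ tgt a ≠ t) :
    Θ.IsEndpoint t ∧ ∀ x ∈ Θ.vertices, p ∈ x.1 → x = t := by
  have htv : t ∈ Θ.vertices := ht.elim And.left And.left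
  refine ⟨?_, fun x hx hpx => ?_⟩
  · obtain ⟨ι⟩ := Θ.nonempty_indexing
    obtain ⟨i, hi, rfl⟩ := (ι.mem_vertices t).1 htv
    cases i with
    | zero => exact ι.isEndpoint_zero
    | succ i =>
      by_cases hi' : i + 1 = ι.length
      · rw [hi']; exact ι.isEndpoint_length
      exfalso
      have hlt : i + 1 < ι.length := by omega
      have hai := (ι.mem_arrows _).2 ⟨i, hi, rfl⟩
      have haj := (ι.mem_arrows _).2 ⟨i + 1, hlt, rfl⟩
      have h1 : (ι.arrow i).fst ≠ p :=
        fun h' => (ι.touches_succ hi).elim (h _ hai h').1 (h _ hai h').2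
      have h2 : (ι.arrow (i + 1)).fst ≠ p :=
        fun h' => (ι.touches hlt).elim (h _ haj h').1 (h _ haj h').2
      have hfst : (ι.arrow i).fst = (ι.arrow (i + 1)).fst := by
        have g1 := ι.fst_mem_vertex_succ hi
        have g2 := ι.fst_mem_vertex hlt
        have e1 := (Sym2.mem_and_mem_iff h1).1 ⟨g1, hp⟩
        rw [e1, Sym2.mem_iff] at g2
        exact (g2.resolve_right h2).symm
      have heq : ι.arrow i = ι.arrow (i + 1) := by
        rcases ht with ht | ht
        · have t1 := (ι.touches_succ hi).resolve_left (ht.2 _ hai)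
          have t2 := (ι.touches hlt).resolve_left (ht.2 _ haj)
          exact Γ.next.injective (arrow_eq_of_fst_src (by rwa [Γ.next_fst, Γ.next_fst])
            (t1.trans t2.symm))
        · have t1 := (ι.touches_succ hi).resolve_right (ht.2 _ hai)
          have t2 := (ι.touches hlt).resolve_right (ht.2 _ haj)
          exact arrow_eq_of_fst_src hfst (t1.trans t2.symm)
      have := ι.touches hi
      rw [heq] at this
      rcases ι.step (i + 1) hlt with ⟨s1, s2⟩ | ⟨s1, s2⟩ <;> rw [s1, s2] at this <;>
        rcases this with this | this <;> have := ι.inj _ (by omega) _ (by omega) this <;> omega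
  · by_contra hne
    obtain ⟨a, ha, h1, h2⟩ := exists_arrow_of_mem_mem htv hx (Ne.symm hne) hp hpx
    exact h2.elim (h a ha h1).1 (h a ha h1).2

lemma HasDirectedPath.exists_arc {x y : Γ.QVertex} (h : Θ.HasDirectedPath x y) :
    ∃ (c : Γ.Arrow) (k : ℕ), src c = x ∧ tgt ((Γ.next ^ k) c) = y ∧
      ∀ j ≤ k, (Γ.next ^ j) c ∈ Θ.arrows := by
  induction h with
  | single h =>
    obtain ⟨a, ha, rfl, rfl⟩ := h
    exact ⟨a, 0, rfl, rfl, fun j hj => by obtain rfl : j = 0 := by omega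
                                          exact ha⟩
  | tail _ h ih =>
    obtain ⟨a, ha, h1, rfl⟩ := h
    obtain ⟨c, k, h2, h3, h4⟩ := ih
    have h5 := next_eq_of_tgt_eq_src (h4 k le_rfl) ha (h3.trans h1.symm)
    rw [← Equiv.Perm.mul_apply, ← pow_succ'] at h5
    refine ⟨c, k + 1, h2, by rw [h5], fun j hj => ?_⟩
    rcases Nat.lt_or_eq_of_le hj with hj | rfl
    · exact h4 j (by omega)
    · rwa [h5]

lemma hasDirectedPath_of_arc {c : Γ.Arrow} {k : ℕ} (h : ∀ j ≤ k, (Γ.next ^ j) c ∈ Θ.arrows) :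
    Θ.HasDirectedPath (src c) (tgt ((Γ.next ^ k) c)) := by
  induction k with
  | zero => exact .single ⟨c, h 0 le_rfl, rfl, rfl⟩
  | succ k ih =>
    refine .tail (ih fun j hj => h j (by omega)) ⟨_, h (k + 1) le_rfl, ?_, rfl⟩
    rw [pow_succ', Equiv.Perm.mul_apply]
    rfl

lemma arc_length_le_of_isSink {c : Γ.Arrow} {k l : ℕ} (hk : Θ.IsSink (tgt ((Γ.next ^ k) c)))
    (hl : ∀ j ≤ l, (Γ.next ^ j) c ∈ Θ.arrows) : l ≤ k := by
  by_contra h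
  refine hk.2 _ (hl (k + 1) (by omega)) ?_
  rw [pow_succ', Equiv.Perm.mul_apply]
  rfl

lemma arc_length_le_of_isSource {c d : Γ.Arrow} {k l : ℕ} (hc : Θ.IsSource (src c))
    (hl : ∀ j ≤ l, (Γ.next ^ j) d ∈ Θ.arrows) (h : (Γ.next ^ k) c = (Γ.next ^ l) d) : l ≤ k := by
  by_contra hkl
  refine hc.2 _ (hl (l - k - 1) (by omega)) ?_
  have : c = (Γ.next ^ (l - k)) d := by
    apply (Γ.next ^ k).injective
    rw [h, ← next_pow_add_apply]
    congr 2
    omega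
  rw [this, show l - k = (l - k - 1) + 1 by omega, pow_succ', Equiv.Perm.mul_apply]
  rfl

section Finite

variable [Finite V]

lemma exists_next_pow_notMem (a : Γ.Arrow) : ∃ k : ℕ, (Γ.next ^ k) a ∉ Θ.arrows := by
  classical
  by_contra! hall
  obtain ⟨ι⟩ := Θ.nonempty_indexing
  have hex : ∃ i, i < ι.length ∧ ∃ k : ℕ, (Γ.next ^ k) a = ι.arrow i := by
    obtain ⟨i, hi, h⟩ := (ι.mem_arrows _).1 (hall 0)
    exact ⟨i, hi, 0, h.symm⟩
  obtain ⟨hi, k, hk⟩ := Nat.find_spec hex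
  have hmin (l j : ℕ) (hj : j < ι.length) (h : ι.arrow j = (Γ.next ^ l) a) : Nat.find hex ≤ j :=
    Nat.find_min' hex ⟨hj, l, h.symm⟩
  generalize Nat.find hex = i at *
  rcases ι.step i hi with ⟨h1, h2⟩ | ⟨h1, h2⟩
  · obtain ⟨j, hj, h⟩ := (ι.mem_arrows _).1 (hall (k + (period a - 1)))
    have hp := period_pos a
    have hnext : Γ.next (ι.arrow j) = ι.arrow i := by
      rw [h, ← Equiv.Perm.mul_apply, ← pow_succ',
        show k + (period a - 1) + 1 = period a + k by omega,
        next_pow_add_apply, next_pow_period, hk]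
    have ht : tgt (ι.arrow j) = ι.vertex i := by rw [tgt, hnext, h1]
    have hij := hmin _ j hj h
    rcases ι.step j hj with ⟨g1, g2⟩ | ⟨g1, g2⟩
    · have := ι.inj _ hi.le _ hj (ht.symm.trans g2)
      omega
    · obtain rfl := ι.inj _ hi.le _ hj.le (ht.symm.trans g1)
      exact ι.src_ne_tgt hi (by rw [h1, ht])
  · obtain ⟨j, hj, h⟩ := (ι.mem_arrows _).1 (hall (k + 1))
    have hnext : Γ.next (ι.arrow i) = ι.arrow j := by
      rw [h, ← hk, pow_succ', Equiv.Perm.mul_apply]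
    have ht : src (ι.arrow j) = ι.vertex i := by rw [← hnext, ← tgt, h1]
    have hij := hmin _ j hj h
    rcases ι.step j hj with ⟨g1, g2⟩ | ⟨g1, g2⟩
    · obtain rfl := ι.inj _ hi.le _ hj.le (ht.symm.trans g1)
      exact ι.src_ne_tgt hi (by rw [h1, ht])
    · have := ι.inj _ hi.le _ hj (ht.symm.trans g2)
      omega

/-- Following the cycle of an arrow of the diagram, one arrives at a sink. -/
lemma exists_arc_to_sink {a : Γ.Arrow} (ha : a ∈ Θ.arrows) :
    ∃ k : ℕ, Θ.IsSink (tgt ((Γ.next ^ k) a)) ∧ ∀ j ≤ k, (Γ.next ^ j) a ∈ Θ.arrows := by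
  classical
  have hex := Θ.exists_next_pow_notMem a
  obtain ⟨k, hk⟩ : ∃ k, Nat.find hex = k + 1 := Nat.exists_eq_add_one.2 (by
    rw [Nat.find_pos]; simpa using ha)
  have hmem : ∀ j ≤ k, (Γ.next ^ j) a ∈ Θ.arrows := fun j hj =>
    not_not.1 (Nat.find_min hex (by omega))
  refine ⟨k, ⟨tgt_mem_vertices (hmem k le_rfl), fun b hb h => Nat.find_spec hex ?_⟩, hmem⟩
  rw [hk, pow_succ', Equiv.Perm.mul_apply, next_eq_of_tgt_eq_src (hmem k le_rfl) hb h.symm]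
  exact hb

/-- Going back along the cycle of an arrow of the diagram, one arrives at a source. -/
lemma exists_arc_from_source {a : Γ.Arrow} (ha : a ∈ Θ.arrows) :
    ∃ (b : Γ.Arrow) (k : ℕ), Θ.IsSource (src b) ∧ (Γ.next ^ k) b = a ∧
      ∀ j ≤ k, (Γ.next ^ j) b ∈ Θ.arrows := by
  classical
  obtain ⟨l, hl⟩ := Θ.exists_next_pow_notMem a
  obtain ⟨n, -, hn⟩ := exists_next_pow_eq (a := (Γ.next ^ l) a) (b := a) (next_pow_fst a l)
  generalize (Γ.next ^ l) a = c at *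
  set g := Nat.findGreatest (fun j => (Γ.next ^ j) c ∉ Θ.arrows) n with hg
  have hgn : g ≤ n := Nat.findGreatest_le n
  have hgc : (Γ.next ^ g) c ∉ Θ.arrows :=
    Nat.findGreatest_spec (P := fun j => (Γ.next ^ j) c ∉ Θ.arrows) (Nat.zero_le n) hl
  have hmem (j : ℕ) (h1 : g < j) (h2 : j ≤ n) : (Γ.next ^ j) c ∈ Θ.arrows :=
    not_not.1 (Nat.findGreatest_is_greatest h1 h2)
  have hne : g ≠ n := by
    intro h
    rw [h, hn] at hgc
    exact hgc ha
  refine ⟨(Γ.next ^ (g + 1)) c, n - (g + 1), ⟨src_mem_vertices (hmem _ (by omega) (by omega)),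
    fun b hb h => hgc ?_⟩, ?_, fun j hj => ?_⟩
  · have := next_eq_of_tgt_eq_src hb (hmem (g + 1) (by omega) (by omega)) h
    rw [pow_succ', Equiv.Perm.mul_apply] at this
    rwa [← Γ.next.injective this]
  · rw [← next_pow_add_apply, show g + 1 + (n - (g + 1)) = n by omega, hn]
  · rw [← next_pow_add_apply]
    exact hmem _ (by omega) (by omega)

end Finite

end Diagram

end BrauerTree

namespace BrauerTree

variable {V : Type v} {Γ : BrauerTree V} {K : Type u} [Field K]

section Projectives

lemma mul_idem_of_mem_span {y : Γ.QVertex} {z : Γ.Alg K}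
    (hz : z ∈ (Ideal.span {Γ.idem K y} : Ideal (Γ.Alg K))) : z * Γ.idem K y = z := by
  obtain ⟨w, rfl⟩ := Ideal.mem_span_singleton'.1 hz
  rw [mul_assoc, idem_mul_self]

/-- The idempotent `e_x` as an element of `A e_x`. -/
noncomputable def projGen (K : Type u) [Field K] (x : Γ.QVertex) :
    (Ideal.span {Γ.idem K x} : Ideal (Γ.Alg K)) :=
  ⟨Γ.idem K x, Ideal.mem_span_singleton_self _⟩

lemma smul_projGen {x : Γ.QVertex} (m : (Ideal.span {Γ.idem K x} : Ideal (Γ.Alg K))) :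
    m.1 • projGen K x = m :=
  Subtype.ext (mul_idem_of_mem_span m.2)

/-- The linear map underlying a morphism of indecomposable projectives. -/
noncomputable def projHom {x y : Γ.QVertex} (f : Γ.proj K x ⟶ Γ.proj K y) :
    (Ideal.span {Γ.idem K x} : Ideal (Γ.Alg K)) →ₗ[Γ.Alg K]
      (Ideal.span {Γ.idem K y} : Ideal (Γ.Alg K)) := f.hom

/-- The element of `e_x A e_y` by which a morphism `A e_x ⟶ A e_y` multiplies from the right. -/
noncomputable def homVal {x y : Γ.QVertex} : (Γ.proj K x ⟶ Γ.proj K y) →+ Γ.Alg K where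
  toFun f := (projHom f (projGen K x)).1
  map_zero' := rfl
  map_add' _ _ := rfl

lemma idem_mul_homVal_mul_idem {x y : Γ.QVertex} (f : Γ.proj K x ⟶ Γ.proj K y) :
    Γ.idem K x * homVal f * Γ.idem K y = homVal f := by
  rw [mul_assoc, show homVal f * Γ.idem K y = homVal f from
    mul_idem_of_mem_span (projHom f (projGen K x)).2]
  have h : projHom f (Γ.idem K x • projGen K x) = Γ.idem K x • projHom f (projGen K x) :=
    map_smul _ _ _
  rw [show Γ.idem K x • projGen K x = projGen K x from smul_projGen (projGen K x)] at h
  exact (congrArg Subtype.val h).symm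

lemma homVal_comp {x y z : Γ.QVertex} (f : Γ.proj K x ⟶ Γ.proj K y) (g : Γ.proj K y ⟶ Γ.proj K z) :
    homVal (f ≫ g) = homVal f * homVal g := by
  have h : projHom g (homVal f • projGen K y) = homVal f • projHom g (projGen K y) :=
    map_smul _ _ _
  rw [show homVal f • projGen K y = projHom f (projGen K x) from smul_projGen _] at h
  exact congrArg Subtype.val h

lemma homVal_eq_zero_iff {x y : Γ.QVertex} {f : Γ.proj K x ⟶ Γ.proj K y} :
    homVal f = 0 ↔ f = 0 := by
  refine ⟨fun h => ?_, fun h => by rw [h, map_zero]⟩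
  ext m
  change (Ideal.span {Γ.idem K x} : Ideal (Γ.Alg K)) at m
  have h1 : projHom f (m.1 • projGen K x) = m.1 • projHom f (projGen K x) := map_smul _ _ _
  rw [smul_projGen, show projHom f (projGen K x) = 0 from Subtype.ext h, smul_zero] at h1
  exact h1

lemma exists_homVal_eq {x y : Γ.QVertex} {z : Γ.Alg K} (hz : Γ.idem K x * z * Γ.idem K y = z) :
    ∃ f : Γ.proj K x ⟶ Γ.proj K y, homVal f = z := by
  have hmem (m : Γ.Alg K) : m * z ∈ (Ideal.span {Γ.idem K y} : Ideal (Γ.Alg K)) := by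
    rw [← hz, ← mul_assoc]
    exact Ideal.mul_mem_left _ _ (Ideal.mem_span_singleton_self _)
  let f : (Ideal.span {Γ.idem K x} : Ideal (Γ.Alg K)) →ₗ[Γ.Alg K]
      (Ideal.span {Γ.idem K y} : Ideal (Γ.Alg K)) :=
    { toFun := fun m => ⟨m.1 * z, hmem _⟩
      map_add' := fun m n => Subtype.ext (add_mul m.1 n.1 z)
      map_smul' := fun r m => Subtype.ext (mul_assoc r m.1 z) }
  refine ⟨ModuleCat.ofHom f, ?_⟩
  change Γ.idem K x * z = z
  rw [← hz, ← mul_assoc, ← mul_assoc, idem_mul_self]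

end Projectives

section Biproducts

variable {J J' J'' : Type*} [Finite J] [Finite J'] [Finite J'']
  {P : J → Γ.QVertex} {P' : J' → Γ.QVertex} {P'' : J'' → Γ.QVertex}

/-- The matrix entries of a morphism between sums of indecomposable projectives. -/
noncomputable def entry (f : (⨁ fun j => Γ.proj K (P j)) ⟶ ⨁ fun j => Γ.proj K (P' j))
    (i : J) (j : J') : Γ.Alg K :=
  homVal (biproduct.ι (fun j => Γ.proj K (P j)) i ≫ f ≫ biproduct.π (fun j => Γ.proj K (P' j)) j)

lemma entry_zero (i : J) (j : J') :
    entry (0 : (⨁ fun j => Γ.proj K (P j)) ⟶ ⨁ fun j => Γ.proj K (P' j)) i j = 0 := by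
  rw [entry, zero_comp, comp_zero, map_zero]

lemma exists_entry_ne_zero {f : (⨁ fun j => Γ.proj K (P j)) ⟶ ⨁ fun j => Γ.proj K (P' j)}
    (hf : f ≠ 0) : ∃ i j, entry f i j ≠ 0 := by
  by_contra! h
  apply hf
  refine biproduct.hom_ext' _ _ fun i => biproduct.hom_ext _ _ fun j => ?_
  rw [Category.assoc, homVal_eq_zero_iff.1 (h i j), comp_zero, zero_comp]

lemma entry_comp [Fintype J'] (f : (⨁ fun j => Γ.proj K (P j)) ⟶ ⨁ fun j => Γ.proj K (P' j))
    (g : (⨁ fun j => Γ.proj K (P' j)) ⟶ ⨁ fun j => Γ.proj K (P'' j)) (i : J) (k : J'') :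
    entry (f ≫ g) i k = ∑ j, entry f i j * entry g j k := by
  have h : f ≫ g = ∑ j, (f ≫ biproduct.π (fun j => Γ.proj K (P' j)) j) ≫
      biproduct.ι (fun j => Γ.proj K (P' j)) j ≫ g := by
    have htotal : ∑ j, biproduct.π (fun j => Γ.proj K (P' j)) j ≫
        biproduct.ι (fun j => Γ.proj K (P' j)) j = 𝟙 _ :=
      IsBilimit.total (biproduct.isBilimit _)
    have h' := congrArg (fun e => f ≫ e ≫ g) htotal
    simpa only [Category.id_comp, Preadditive.sum_comp, Preadditive.comp_sum, Category.assoc]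
      using h'.symm
  rw [entry, h, Preadditive.sum_comp, Preadditive.comp_sum, map_sum]
  refine Finset.sum_congr rfl fun j _ => ?_
  rw [entry, entry, ← homVal_comp]
  simp only [Category.assoc]

lemma idem_mul_entry_mul_idem (f : (⨁ fun j => Γ.proj K (P j)) ⟶ ⨁ fun j => Γ.proj K (P' j))
    (i : J) (j : J') : Γ.idem K (P i) * entry f i j * Γ.idem K (P' j) = entry f i j :=
  idem_mul_homVal_mul_idem _

end Biproducts

end BrauerTree

namespace BrauerTree

variable {V : Type v} {Γ : BrauerTree V} {K : Type u} [Field K]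

namespace Diagram

variable {Θ Θ' : Γ.Diagram K}

lemma IsSource.ne_of_isSink {x t : Γ.QVertex} (hx : Θ.IsSource x) (ht : Θ.IsSink t) : x ≠ t := by
  rintro rfl
  obtain ⟨ι⟩ := Θ.nonempty_indexing
  obtain ⟨i, hi, rfl⟩ := (ι.mem_vertices x).1 hx.1
  rcases Nat.lt_or_eq_of_le hi with h | rfl
  · have ha := (ι.mem_arrows _).2 ⟨i, h, rfl⟩
    exact (ι.touches h).elim (ht.2 _ ha) (hx.2 _ ha)
  · obtain ⟨n, hn⟩ := Nat.exists_eq_add_one.2 ι.length_pos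
    rw [hn] at hx ht
    have ha := (ι.mem_arrows _).2 ⟨n, by omega, rfl⟩
    exact (ι.touches_succ (by omega)).elim (ht.2 _ ha) (hx.2 _ ha)

section Matrices

variable (D : (⨁ fun i : {x // Θ.IsSource x} => Γ.proj K i.1) ⟶
    ⨁ fun j : {x // Θ.IsSink x} => Γ.proj K j.1)
  (D' : (⨁ fun i : {x // Θ'.IsSource x} => Γ.proj K i.1) ⟶
    ⨁ fun j : {x // Θ'.IsSink x} => Γ.proj K j.1)
  (G : (⨁ fun j : {x // Θ.IsSink x} => Γ.proj K j.1) ⟶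
    ⨁ fun i : {x // Θ'.IsSource x} => Γ.proj K i.1)

variable [Finite V]

/-- If the entry of `G` at a sink `t` of `Θ` and a source `s` of `Θ'` is a path around a vertex `p`
of the tree, then `D ≫ G = 0` excludes that `Θ` has an arrow around `p` ending in `t`. -/
lemma tgt_ne_of_comp_eq_zero (hD : ∀ i j, entry D i j ≠ 0 ↔ Θ.HasDirectedPath i.1 j.1)
    (hdisj : ∀ x ∈ Θ.vertices, x ∉ Θ'.vertices) (hDG : D ≫ G = 0)
    (t : {x // Θ.IsSink x}) (s : {x // Θ'.IsSource x}) {b : Γ.Arrow} {k : ℕ} {μ : K}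
    (hb : src b = t.1) (hs : src ((Γ.next ^ k) b) = s.1) (hk : k < period b)
    (hμ : μ ≠ 0) (hu : entry G t s = μ • path K b k) {a : Γ.Arrow} (ha : a ∈ Θ.arrows)
    (hab : a.fst = b.fst) : tgt a ≠ t.1 := by
  intro hat
  have := Fintype.ofFinite {x // Θ.IsSink x}
  obtain ⟨c, l, hc, rfl, harc⟩ := exists_arc_from_source ha
  rw [next_pow_fst] at hab
  have hnext : (Γ.next ^ (l + 1)) c = b := by
    refine arrow_eq_of_fst_src (by rw [next_pow_fst, hab]) ?_
    rw [pow_succ', Equiv.Perm.mul_apply, hb, ← hat, tgt]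
  let x : {x // Θ.IsSource x} := ⟨src c, hc⟩
  have hcs : src c ≠ s.1 := fun h => hdisj _ hc.1 (h ▸ s.2.1)
  have hcx : c.fst ∈ (src c).1 := fst_mem_src c
  have hbt : b.fst ∈ t.1.1 := hb ▸ fst_mem_src b
  have hbs : b.fst ∈ s.1.1 := by rw [← hs, ← next_pow_fst b k]; exact fst_mem_src _
  have hsum := entry_comp D G x s
  rw [hDG, entry_zero, Finset.sum_eq_single t] at hsum
  · have hw : entry D x t ≠ 0 := by
      rw [hD, ← hat]
      exact hasDirectedPath_of_arc harc
    have hxt : src c ≠ t.1 := hc.ne_of_isSink t.2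
    obtain ⟨d, m, ν, h1, h2, h3, h4, h5, h6⟩ :=
      (eq_zero_or_eq_smul_path hxt (idem_mul_entry_mul_idem D x t)).resolve_left hw
    have hdt : d.fst ∈ t.1.1 := by rw [← h2, ← next_pow_fst d m]; exact fst_mem_src _
    have hdc : d = c := arrow_eq_of_fst_src
      (eq_of_mem_mem hxt (h1 ▸ fst_mem_src d) hdt hcx (hab ▸ hbt)) h1
    subst hdc
    have hmb : (Γ.next ^ m) d = b :=
      arrow_eq_of_fst_src (by rw [next_pow_fst, hab]) (h2.trans hb.symm)
    have hml : m ≤ l + 1 := by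
      by_contra h
      have := next_pow_inj h4 (by omega) (hmb.trans hnext.symm)
      omega
    have hper : period b = period d := by
      rw [← hmb, period, next_pow_eq_iterate,
        Function.minimalPeriod_apply_iterate (Γ.next.injective.mem_periodicPts d)]
    have hlt : m + k < period d := by
      by_contra h
      apply hdisj s.1 _ s.2.1
      obtain ⟨i, hi⟩ : ∃ i, m + k = period d + i := ⟨m + k - period d, by omega⟩
      have hj := src_mem_vertices (harc i (by omega))
      have hid : (Γ.next ^ i) d = (Γ.next ^ k) b := by
        rw [← hmb, ← next_pow_add_apply, hi, next_pow_add_apply, next_pow_period]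
      rwa [hid, hs] at hj
    rw [h6, hu, smul_mul_smul_comm, ← hmb, path_mul_path] at hsum
    exact smul_ne_zero (mul_ne_zero h5 hμ) (path_ne_zero hlt) hsum.symm
  · intro t' _ htt'
    by_contra hne
    have hw := left_ne_zero_of_mul hne
    have hu' := right_ne_zero_of_mul hne
    have hxt' : src c ≠ t'.1 := hc.ne_of_isSink t'.2
    have hts' : t'.1 ≠ s.1 := fun h => hdisj _ t'.2.1 (h ▸ s.2.1)
    obtain ⟨d, m, ν, h1, h2, h3, h4, h5, h6⟩ :=
      (eq_zero_or_eq_smul_path hxt' (idem_mul_entry_mul_idem D x t')).resolve_left hw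
    obtain ⟨e, n, ξ, g1, g2, g3, g4, g5, g6⟩ :=
      (eq_zero_or_eq_smul_path hts' (idem_mul_entry_mul_idem G t' s)).resolve_left hu'
    have hde : d.fst = e.fst := by
      by_contra h
      rw [h6, g6, smul_mul_smul_comm, path_mul_path_eq_zero h h3 g3, smul_zero] at hne
      exact hne rfl
    have hes : e.fst ∈ s.1.1 := by rw [← g2, ← next_pow_fst e n]; exact fst_mem_src _
    have hdx : d.fst ∈ (src c).1 := h1 ▸ fst_mem_src d
    have hdc : d.fst = c.fst :=
      eq_of_mem_mem hcs hdx (hde ▸ hes) hcx (hab ▸ hbs)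
    have hdt' : d.fst ∈ t'.1.1 := hde ▸ g1 ▸ fst_mem_src e
    obtain ⟨f, r, f1, f2, f3⟩ := ((hD x t').1 hw).exists_arc
    change src f = src c at f1
    have hft' : f.fst ∈ t'.1.1 := by rw [← f2, ← next_pow_fst f r]; exact fst_mem_tgt _
    have hfc : f = c := arrow_eq_of_fst_src
      ((eq_of_mem_mem hxt' (f1 ▸ fst_mem_src f) hft' hdx hdt').trans hdc) f1
    subst hfc
    have hrl : r = l := le_antisymm
      (arc_length_le_of_isSink (k := l) (hat ▸ t.2) f3)
      (arc_length_le_of_isSink (k := r) (f2 ▸ t'.2) harc)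
    subst hrl
    exact htt' (Subtype.ext (f2.symm.trans hat))
  · intro h
    exact absurd (Finset.mem_univ t) h

/-- If the entry of `G` at a sink `t` of `Θ` and a source `s` of `Θ'` is a path around a vertex `p`
of the tree, then `G ≫ D' = 0` excludes that `Θ'` has an arrow around `p` starting in `s`. -/
lemma src_ne_of_comp_eq_zero (hD : ∀ i j, entry D' i j ≠ 0 ↔ Θ'.HasDirectedPath i.1 j.1)
    (hdisj : ∀ x ∈ Θ.vertices, x ∉ Θ'.vertices) (hGD : G ≫ D' = 0)
    (t : {x // Θ.IsSink x}) (s : {x // Θ'.IsSource x}) {b : Γ.Arrow} {k : ℕ} {μ : K}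
    (hb : src b = t.1) (hs : src ((Γ.next ^ k) b) = s.1) (hk : k < period b)
    (hμ : μ ≠ 0) (hu : entry G t s = μ • path K b k) {a : Γ.Arrow} (ha : a ∈ Θ'.arrows)
    (hab : a.fst = b.fst) : src a ≠ s.1 := by
  intro has
  have := Fintype.ofFinite {x // Θ'.IsSource x}
  obtain ⟨l, hl, harc⟩ := exists_arc_to_sink ha
  have hkb : (Γ.next ^ k) b = a :=
    arrow_eq_of_fst_src (by rw [next_pow_fst, hab]) (hs.trans has.symm)
  let y : {x // Θ'.IsSink x} := ⟨_, hl⟩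
  have hyl : src ((Γ.next ^ (l + 1)) a) = y.1 := by
    rw [pow_succ', Equiv.Perm.mul_apply]; rfl
  have hty : t.1 ≠ y.1 := fun h => hdisj _ t.2.1 (h ▸ y.2.1)
  have hbt : b.fst ∈ t.1.1 := hb ▸ fst_mem_src b
  have hby : b.fst ∈ y.1.1 := by rw [← hab, ← hyl, ← next_pow_fst a (l + 1)]; exact fst_mem_src _
  have hbs : b.fst ∈ s.1.1 := by rw [← hab, ← has]; exact fst_mem_src _
  have hsum := entry_comp G D' t y
  rw [hGD, entry_zero, Finset.sum_eq_single s] at hsum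
  · have hw : entry D' s y ≠ 0 := by
      rw [hD, ← has]
      exact hasDirectedPath_of_arc harc
    have hsy : s.1 ≠ y.1 := s.2.ne_of_isSink y.2
    obtain ⟨d, m, ν, h1, h2, h3, h4, h5, h6⟩ :=
      (eq_zero_or_eq_smul_path hsy (idem_mul_entry_mul_idem D' s y)).resolve_left hw
    have hdy : d.fst ∈ y.1.1 := by rw [← h2, ← next_pow_fst d m]; exact fst_mem_src _
    have hda : d = a := arrow_eq_of_fst_src
      ((eq_of_mem_mem hsy (h1 ▸ fst_mem_src d) hdy hbs hby).trans hab.symm) (h1.trans has.symm)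
    subst hda
    have hml : m ≤ l + 1 := by
      by_contra h
      have := next_pow_inj h4 (by omega)
        (arrow_eq_of_fst_src (by rw [next_pow_fst, next_pow_fst]) (h2.trans hyl.symm))
      omega
    have hlt : k + m < period b := by
      by_contra h
      apply hdisj t.1 t.2.1
      obtain ⟨i, hi⟩ : ∃ i, period b = k + (i + 1) := ⟨period b - k - 1, by omega⟩
      have hj := tgt_mem_vertices (harc i (by omega))
      have hib : Γ.next ((Γ.next ^ i) d) = b := by
        rw [← Equiv.Perm.mul_apply, ← pow_succ', ← hkb, ← next_pow_add_apply, ← hi,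
          next_pow_period]
      rwa [tgt, hib, hb] at hj
    rw [h6, hu, smul_mul_smul_comm, ← hkb, path_mul_path] at hsum
    exact smul_ne_zero (mul_ne_zero hμ h5) (path_ne_zero hlt) hsum.symm
  · intro s' _ hss'
    by_contra hne
    have hu' := left_ne_zero_of_mul hne
    have hw := right_ne_zero_of_mul hne
    have hsy' : s'.1 ≠ y.1 := s'.2.ne_of_isSink y.2
    have hts' : t.1 ≠ s'.1 := fun h => hdisj _ t.2.1 (h ▸ s'.2.1)
    obtain ⟨d, m, ν, h1, h2, h3, h4, h5, h6⟩ :=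
      (eq_zero_or_eq_smul_path hsy' (idem_mul_entry_mul_idem D' s' y)).resolve_left hw
    obtain ⟨e, n, ξ, g1, g2, g3, g4, g5, g6⟩ :=
      (eq_zero_or_eq_smul_path hts' (idem_mul_entry_mul_idem G t s')).resolve_left hu'
    have hde : e.fst = d.fst := by
      by_contra h
      rw [h6, g6, smul_mul_smul_comm, path_mul_path_eq_zero h g3 h3, smul_zero] at hne
      exact hne rfl
    have hdy : d.fst ∈ y.1.1 := by rw [← h2, ← next_pow_fst d m]; exact fst_mem_src _
    have hdb : d.fst = b.fst :=
      eq_of_mem_mem hty (hde ▸ g1 ▸ fst_mem_src e) hdy hbt hby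
    obtain ⟨f, r, f1, f2, f3⟩ := ((hD s' y).1 hw).exists_arc
    have hfy : f.fst ∈ y.1.1 := by rw [← f2, ← next_pow_fst f r]; exact fst_mem_tgt _
    have hfd : f.fst = d.fst :=
      eq_of_mem_mem hsy' (f1 ▸ fst_mem_src f) hfy (h1 ▸ fst_mem_src d) hdy
    have hend : (Γ.next ^ r) f = (Γ.next ^ l) a := by
      apply Γ.next.injective
      refine arrow_eq_of_fst_src ?_ f2
      rw [Γ.next_fst, Γ.next_fst, next_pow_fst, next_pow_fst, hfd, hdb, hab]
    have hrl : r = l := le_antisymm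
      (arc_length_le_of_isSource (c := a) (has ▸ s.2) f3 hend.symm)
      (arc_length_le_of_isSource (c := f) (f1 ▸ s'.2) harc hend)
    subst hrl
    have hfa : f = a := (Γ.next ^ r).injective hend
    subst hfa
    exact hss' (Subtype.ext (f1.symm.trans has))
  · intro h
    exact absurd (Finset.mem_univ s) h

/-- A nonzero morphism `G` annihilated by the differentials `D` and `D'` forces a degree-one sink
of `Θ` and a degree-one source of `Θ'` at a vertex of the tree where the diagrams have no other
vertices. -/
lemma sinkSourceOn_of_comp_eq_zero (hD : ∀ i j, entry D i j ≠ 0 ↔ Θ.HasDirectedPath i.1 j.1)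
    (hD' : ∀ i j, entry D' i j ≠ 0 ↔ Θ'.HasDirectedPath i.1 j.1)
    (hdisj : ∀ x ∈ Θ.vertices, x ∉ Θ'.vertices) (hDG : D ≫ G = 0) (hGD : G ≫ D' = 0) (hG : G ≠ 0)
    {c : List Γ.Arrow} (hc : Γ.IsACycle K c) (h : ∃ x ∈ Θ.vertices, OnCycle c x)
    (h' : ∃ x ∈ Θ'.vertices, OnCycle c x) : Θ.SinkSourceOn Θ' c := by
  obtain ⟨x, hx, hxc⟩ := h
  obtain ⟨x', hx', hxc'⟩ := h'
  obtain ⟨p, hp⟩ := hc.exists_onCycle_iff (by rintro rfl; simp [OnCycle] at hxc)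
  obtain ⟨t, s, hts⟩ := exists_entry_ne_zero hG
  have hne : t.1 ≠ s.1 := fun h => hdisj _ t.2.1 (h ▸ s.2.1)
  obtain ⟨b, k, μ, hb, hs, -, hk, hμ, hu⟩ :=
    (eq_zero_or_eq_smul_path hne (idem_mul_entry_mul_idem G t s)).resolve_left hts
  have hbt : b.fst ∈ t.1.1 := hb ▸ fst_mem_src b
  have hbs : b.fst ∈ s.1.1 := by rw [← hs, ← next_pow_fst b k]; exact fst_mem_src _
  have hpb : b.fst = p := eq_of_disjoint hdisj t.2.1 hx s.2.1 hx' hbt hbs ((hp x).1 hxc)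
    ((hp x').1 hxc')
  obtain ⟨ht1, ht2⟩ := isEndpoint_and_eq_of_no_arrow (.inl t.2) hbt fun a ha hab =>
    ⟨t.2.2 a ha, tgt_ne_of_comp_eq_zero D G hD hdisj hDG t s hb hs hk hμ hu ha hab⟩
  obtain ⟨hs1, hs2⟩ := isEndpoint_and_eq_of_no_arrow (.inr s.2) hbs fun a ha hab =>
    ⟨src_ne_of_comp_eq_zero D' G hD' hdisj hGD t s hb hs hk hμ hu ha hab, s.2.2 a ha⟩
  simp only [hpb] at ht2 hs2 hbt hbs
  refine ⟨s.1, t.1, ⟨s.2, hs1⟩, (hp _).2 hbs, ⟨t.2, ht1⟩, (hp _).2 hbt, ?_, ?_⟩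
  · exact fun y hy hyc => hs2 y hy ((hp y).1 hyc)
  · exact fun y hy hyc => ht2 y hy ((hp y).1 hyc)

/-- A degree-one sink of `Θ` and a degree-one source of `Θ'` on a cycle containing no other vertices
of the diagrams give a nonzero morphism annihilated by the differentials. -/
lemma SinkSourceOn.exists_comp_eq_zero (hdisj : ∀ x ∈ Θ.vertices, x ∉ Θ'.vertices)
    {c : List Γ.Arrow} (hc : Γ.IsACycle K c) (h : Θ.SinkSourceOn Θ' c) :
    ∃ G : (⨁ fun j : {x // Θ.IsSink x} => Γ.proj K j.1) ⟶
      ⨁ fun i : {x // Θ'.IsSource x} => Γ.proj K i.1, D ≫ G = 0 ∧ G ≫ D' = 0 ∧ G ≠ 0 := by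
  obtain ⟨s, t, ⟨hs, -⟩, hsc, ⟨ht, -⟩, htc, hs', ht'⟩ := h
  obtain ⟨p, hp⟩ := hc.exists_onCycle_iff (by rintro rfl; simp [OnCycle] at hsc)
  rw [hp] at hsc htc
  have hne : t ≠ s := fun h => hdisj _ ht.1 (h ▸ hs.1)
  obtain ⟨b, hbp, rfl⟩ := exists_src_eq htc
  obtain ⟨b', hbp', rfl⟩ := exists_src_eq hsc
  obtain ⟨k, hk, rfl⟩ := exists_next_pow_eq (hbp.trans hbp'.symm)
  have hk0 : 0 < k := by
    rw [Nat.pos_iff_ne_zero]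
    rintro rfl
    exact hne rfl
  obtain ⟨f, hf⟩ := exists_homVal_eq (K := K) (x := src b) (y := src ((Γ.next ^ k) b))
    (z := path K b k) (by rw [idem_src_mul_path, path_mul_idem])
  let t₀ : {x // Θ.IsSink x} := ⟨_, ht⟩
  let s₀ : {x // Θ'.IsSource x} := ⟨_, hs⟩
  let π := biproduct.π (fun j : {x // Θ.IsSink x} => Γ.proj K j.1) t₀
  let ι := biproduct.ι (fun i : {x // Θ'.IsSource x} => Γ.proj K i.1) s₀
  refine ⟨π ≫ f ≫ ι, ?_, ?_, fun h => ?_⟩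
  · suffices h : D ≫ π ≫ f = 0 by rw [← Category.assoc π, ← Category.assoc, h, zero_comp]
    refine biproduct.hom_ext' _ _ fun x => ?_
    rw [comp_zero, ← Category.assoc, ← Category.assoc, ← homVal_eq_zero_iff, homVal_comp, hf,
      Category.assoc]
    change entry D x t₀ * _ = 0
    have hxt : x.1 ≠ t₀.1 := x.2.ne_of_isSink ht
    rcases eq_zero_or_eq_smul_path hxt (idem_mul_entry_mul_idem D x t₀) with
      h | ⟨d, m, ν, h1, h2, h3, h4, h5, h6⟩
    · rw [h, zero_mul]
    · rw [h6, smul_mul_assoc, path_mul_path_eq_zero _ h3 hk0, smul_zero]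
      intro hdb
      exact hxt (ht' x.1 x.2.1 ((hp _).2 (hbp ▸ hdb ▸ h1 ▸ fst_mem_src d)))
  · suffices h : f ≫ ι ≫ D' = 0 by
      rw [Category.assoc, Category.assoc, h, comp_zero]
    refine biproduct.hom_ext _ _ fun y => ?_
    rw [zero_comp, Category.assoc, Category.assoc, ← homVal_eq_zero_iff, homVal_comp, hf]
    change _ * entry D' s₀ y = 0
    have hsy : s₀.1 ≠ y.1 := hs.ne_of_isSink y.2
    rcases eq_zero_or_eq_smul_path hsy (idem_mul_entry_mul_idem D' s₀ y) with
      h | ⟨d, m, ν, h1, h2, h3, h4, h5, h6⟩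
    · rw [h, mul_zero]
    · rw [h6, mul_smul_comm, path_mul_path_eq_zero _ hk0 h3, smul_zero]
      intro hdb
      refine hsy (hs' y.1 y.2.1 ((hp _).2 ?_)).symm
      rw [← hbp, hdb, ← h2, ← next_pow_fst d m]
      exact fst_mem_src _
  · have hz : f = 0 := by
      have := congrArg (fun e => biproduct.ι (fun j : {x // Θ.IsSink x} => Γ.proj K j.1) t₀ ≫ e ≫
        biproduct.π (fun i : {x // Θ'.IsSource x} => Γ.proj K i.1) s₀) h
      simpa [π, ι] using this
    exact path_ne_zero (K := K) hk (by rw [← hf, hz, map_zero])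

/-- For the diagrams `Θ` and `Θ'` of `T` and `T'`, a nonzero morphism `T¹ ⟶ T'⁰` annihilated by the
differentials exists exactly if a degree-one sink of `Θ` and a degree-one source of `Θ'` are the
only vertices of the diagrams on the common cycle. -/
theorem sinkSourceOn_iff {T T' : CochainComplex (ModuleCat.{max u v} (Γ.Alg K)) ℤ}
    (hT : Θ.IsDiagramOf T) (hT' : Θ'.IsDiagramOf T')
    (hdisj : ∀ x ∈ Θ.vertices, x ∉ Θ'.vertices) {c : List Γ.Arrow} (hc : Γ.IsACycle K c)
    (h : ∃ x ∈ Θ.vertices, OnCycle c x) (h' : ∃ x ∈ Θ'.vertices, OnCycle c x) :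
    Θ.SinkSourceOn Θ' c ↔
      ∃ g : T.X 1 ⟶ T'.X 0, T.d 0 1 ≫ g = 0 ∧ g ≫ T'.d 0 1 = 0 ∧ g ≠ 0 := by
  obtain ⟨φ₀, φ₁, hφ⟩ := hT
  obtain ⟨ψ₀, ψ₁, hψ⟩ := hT'
  have hD i j : entry (φ₀.inv ≫ T.d 0 1 ≫ φ₁.hom) i j ≠ 0 ↔ Θ.HasDirectedPath i.1 j.1 := by
    rw [← hφ, entry, Ne, homVal_eq_zero_iff]
    simp only [Category.assoc, ne_eq]
  have hD' i j : entry (ψ₀.inv ≫ T'.d 0 1 ≫ ψ₁.hom) i j ≠ 0 ↔ Θ'.HasDirectedPath i.1 j.1 := by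
    rw [← hψ, entry, Ne, homVal_eq_zero_iff]
    simp only [Category.assoc, ne_eq]
  constructor
  · intro hss
    obtain ⟨G, h1, h2, h3⟩ := hss.exists_comp_eq_zero (φ₀.inv ≫ T.d 0 1 ≫ φ₁.hom)
      (ψ₀.inv ≫ T'.d 0 1 ≫ ψ₁.hom) hdisj hc
    refine ⟨φ₁.hom ≫ G ≫ ψ₀.inv, ?_, ?_, fun h4 => h3 ?_⟩
    · rw [← cancel_epi φ₀.inv, ← cancel_mono ψ₀.hom]
      simpa using h1
    · rw [← cancel_epi φ₁.inv, ← cancel_mono ψ₁.hom]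
      simpa using h2
    · rw [← cancel_epi φ₁.hom, ← cancel_mono ψ₀.inv]
      simpa using h4
  · rintro ⟨g, h1, h2, h3⟩
    refine sinkSourceOn_of_comp_eq_zero (φ₀.inv ≫ T.d 0 1 ≫ φ₁.hom) (ψ₀.inv ≫ T'.d 0 1 ≫ ψ₁.hom)
      (φ₁.inv ≫ g ≫ ψ₀.hom) hD hD' hdisj ?_ ?_ (fun h4 => h3 ?_) hc h h'
    · simp [reassoc_of% h1]
    · simp [reassoc_of% h2]
    · rw [← cancel_epi φ₁.inv, ← cancel_mono ψ₀.hom]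
      simpa using h4

end Matrices

end Diagram

end BrauerTree

theorem hom_vanishes_of_common_cycle_no_intersection
    {K : Type u} [Field K] [IsAlgClosed K] {V : Type v} [Finite V] (Γ : BrauerTree V)
    [HasDerivedCategory.{w} (ModuleCat.{max u v} (Γ.Alg K))]
    (Ti Tj : CochainComplex (ModuleCat.{max u v} (Γ.Alg K)) ℤ)
    (hTi : IsIndecTwoTermPartialTilting Ti) (hTj : IsIndecTwoTermPartialTilting Tj)
    (hPi : IsPresentationOfModule Ti) (hPj : IsPresentationOfModule Tj)
    (Θi Θj : Γ.Diagram K) (hΘi : Θi.IsDiagramOf Ti) (hΘj : Θj.IsDiagramOf Tj)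
    (Υ : List Γ.Arrow) (hΥ : Γ.IsACycle K Υ)
    (hΥi : ∃ x ∈ Θi.vertices, BrauerTree.OnCycle Υ x)
    (hΥj : ∃ x ∈ Θj.vertices, BrauerTree.OnCycle Υ x)
    (hdisj : ∀ x ∈ Θi.vertices, x ∉ Θj.vertices) :
    (DerivedHomVanishes Ti Tj (-1) ∧ DerivedHomVanishes Tj Ti (-1)) ↔
      ¬ (Θi.SinkSourceOn Θj Υ ∨ Θj.SinkSourceOn Θi Υ) := by
  have hdisj' : ∀ x ∈ Θj.vertices, x ∉ Θi.vertices := fun x hx hx' => hdisj x hx' hx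
  rw [derivedHomVanishes_neg_one_iff hTi.twoTerm hTj.twoTerm hTi.projective,
    derivedHomVanishes_neg_one_iff hTj.twoTerm hTi.twoTerm hTj.projective,
    BrauerTree.Diagram.sinkSourceOn_iff hΘi hΘj hdisj hΥ hΥi hΥj,
    BrauerTree.Diagram.sinkSourceOn_iff hΘj hΘi hdisj' hΥ hΥj hΥi, not_or]
  push Not
  exact Iff.rfl
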